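/- arXiv:2511.20451 — 2 statements merged into one kernel-verified Lean document; each statement's English description precedes it below -/
import Mathlib

section
/- Let ν₂ ∈ (0,1/2) and β ∈ (0,1/2). There exist constants C > 0 and T₀ ∈ (0,1/2), depending only on ν₂, β, such that for every T ∈ (0, T₀), every continuous ξ : [0, T] → ℝ³ × [0, ∞), every M > 0, and every measurable g₁ on ℝ⁴₊ × (0, T) with |g₁(x, t)| ≤ M·μ₀(t)^{ν₂}/|x − ξ(t)|² when |x − ξ(t)| ≥ μ₀(t)R(t) and g₁(x, t) = 0 when |x − ξ(t)| < μ₀(t)R(t), the Duhamel representation ψ of g₁ satisfies for all x ∈ ℝ³ × [0, ∞) and t ∈ (0, T): (i) |ψ(x, t)| ≤ C M T^{ν₂}|log T|^{1−ν₂}; (ii) |ψ(x, t) − ψ(x, T)| ≤ C M (T − t)^{ν₂}|log T|^{ν₂}|log(T − t)|^{1−2ν₂}; (iii) |∇_x ψ(x, t)| ≤ C M μ₀(t)^{ν₂−1}/R(t). -/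
noncomputable section
open Real Set MeasureTheory

/-- `ℝ⁴`, points written `x = (x̃, x₄)` with `x̃ = (x 0, x 1, x 2)` and `x₄ = x 3`. -/
abbrev E4 : Type := EuclideanSpace ℝ (Fin 4)

/-- The open upper half-space `ℝ⁴₊ = {x : x₄ > 0}`. -/
def halfSpace : Set E4 := {x | 0 < x 3}

/-- `μ₀(t) = |log(2T)|·(T - t)/(log(T - t))²`. -/
def μ₀ (T t : ℝ) : ℝ := |Real.log (2 * T)| * (T - t) / (Real.log (T - t)) ^ 2

/-- `R(t) = μ₀(t)^{-β}`. -/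
def Rfn (β T t : ℝ) : ℝ := μ₀ T t ^ (-β)

/-- The Neumann heat kernel of `ℝ⁴₊`:
`K_t(x, z) = (4πt)⁻²(exp(-|x - z|²/(4t)) + exp(-|x - z̄|²/(4t)))` with `z̄ = (z̃, -z₄)`. -/
def heatK (t : ℝ) (x z : E4) : ℝ :=
  (1 / (4 * π * t) ^ 2) *
    (Real.exp (-‖x - z‖ ^ 2 / (4 * t)) +
      Real.exp (-((x 0 - z 0) ^ 2 + (x 1 - z 1) ^ 2 + (x 2 - z 2) ^ 2 + (x 3 + z 3) ^ 2)
        / (4 * t)))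

/-- The Duhamel representation `ψ(x, t) = ∫₀ᵗ ∫_{ℝ⁴₊} K_{t-s}(x, z) g(z, s) dz ds`. -/
def duhamel (g : E4 → ℝ → ℝ) (x : E4) (t : ℝ) : ℝ :=
  ∫ s in (0 : ℝ)..t, ∫ z in halfSpace, heatK (t - s) x z * g z s

/-!
Reflecting the source evenly across the boundary turns the Neumann problem into the heat equation on
the whole space. There a source bounded by `N / |z - ξ|²` and truncated at the radius `r` has, after
the elapsed time `a`, a heat potential of size `N / (a + r²)`; a spatial increment `h` gains the
factor `|h| / √a`, and an increment `δ ≤ a` of the elapsed time gains `δ / a`.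

In terms of the remaining time `σ = T - s`, the source has size `M * m σ` with `m = μ₀ ^ ν₂`, and
`ψ(·, T - τ)` is the integral over `a ∈ (0, T - τ)` of the potentials, after the time `a`, of the
sources at remaining time `τ + a`. In `ψ(·, T)` these same sources have evolved for the time
`τ + a`: the difference is `N / (a + r²)` for `a ≤ τ`, which yields the logarithm of (ii), and gains
`τ / a` for `a > τ`; the remaining sources contribute `∫₀^τ m a / a da`. All these integrals
converge because `m` varies at least like the power `ν₂ > 0` and at most like a power `κ < 1 / 2`
(Potter's bounds); the spatial gain `|h| / √a` bounds the gradient in the same way.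
-/

/-! ### The heat kernel -/

lemma mul_exp_neg_sq_le (x : ℝ) : x * Real.exp (-x ^ 2) ≤ Real.exp (-(x ^ 2 / 4)) := by
  have hx : x ≤ Real.exp (3 * x ^ 2 / 4) := by
    nlinarith [Real.add_one_le_exp (3 * x ^ 2 / 4), sq_nonneg (x - 1)]
  calc x * Real.exp (-x ^ 2) ≤ Real.exp (3 * x ^ 2 / 4) * Real.exp (-x ^ 2) := by gcongr
    _ = Real.exp (-(x ^ 2 / 4)) := by rw [← Real.exp_add]; ring_nf

lemma mul_exp_neg_le (y : ℝ) : y * Real.exp (-y) ≤ 2 * Real.exp (-(y / 2)) := by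
  have hy : y ≤ 2 * Real.exp (y / 2) := by linarith [Real.add_one_le_exp (y / 2)]
  calc y * Real.exp (-y) ≤ 2 * Real.exp (y / 2) * Real.exp (-y) := by gcongr
    _ = 2 * Real.exp (-(y / 2)) := by rw [mul_assoc, ← Real.exp_add]; ring_nf

lemma abs_exp_neg_sq_sub_exp_neg_sq_le {p q : ℝ} (hp : 0 ≤ p) (hq : 0 ≤ q) :
    |Real.exp (-p ^ 2) - Real.exp (-q ^ 2)| ≤
      2 * |p - q| * (Real.exp (-(p ^ 2 / 4)) + Real.exp (-(q ^ 2 / 4))) := by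
  wlog hpq : p ≤ q generalizing p q
  · rw [abs_sub_comm, abs_sub_comm p, add_comm]
    exact this hq hp (le_of_not_ge hpq)
  have hderiv : ∀ x ∈ Icc p q, HasDerivWithinAt (fun x => Real.exp (-x ^ 2))
      (-(2 * (x * Real.exp (-x ^ 2)))) (Icc p q) x := fun x _ => by
    refine ((hasDerivAt_pow 2 x).fun_neg.exp.congr_deriv ?_).hasDerivWithinAt
    push_cast
    ring
  have hbound : ∀ x ∈ Icc p q,
      ‖-(2 * (x * Real.exp (-x ^ 2)))‖ ≤ 2 * Real.exp (-(p ^ 2 / 4)) := fun x hx => by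
    have hx0 : 0 ≤ x := hp.trans hx.1
    rw [norm_neg, Real.norm_of_nonneg (by positivity)]
    refine mul_le_mul_of_nonneg_left ((mul_exp_neg_sq_le x).trans ?_) two_pos.le
    gcongr
    exact hx.1
  have h := (convex_Icc p q).norm_image_sub_le_of_norm_hasDerivWithin_le hderiv hbound
    (right_mem_Icc.2 hpq) (left_mem_Icc.2 hpq)
  rw [Real.norm_eq_abs, Real.norm_eq_abs] at h
  refine h.trans ?_
  have : 0 ≤ |p - q| * Real.exp (-(q ^ 2 / 4)) := by positivity
  linarith

section HeatKernel

variable {V : Type*} [NormedAddCommGroup V] [InnerProductSpace ℝ V]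

/-- The heat kernel `(4πa)^{-d/2} exp(-|u|²/(4a))` of a Euclidean space of dimension `d`, at time
`a`. -/
def heatKernel (a : ℝ) (u : V) : ℝ :=
  (4 * π * a) ^ (-(Module.finrank ℝ V / 2 : ℝ)) * Real.exp (-(‖u‖ ^ 2 / (4 * a)))

lemma heatKernel_nonneg {a : ℝ} (ha : 0 < a) (u : V) : 0 ≤ heatKernel a u := by
  unfold heatKernel
  positivity

lemma two_pow_mul_heatKernel_four_mul {a : ℝ} (ha : 0 < a) (u : V) :
    2 ^ Module.finrank ℝ V * heatKernel (4 * a) u =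
      (4 * π * a) ^ (-(Module.finrank ℝ V / 2 : ℝ)) * Real.exp (-(‖u‖ ^ 2 / (16 * a))) := by
  have hfour : (4 : ℝ) ^ (-(Module.finrank ℝ V / 2 : ℝ)) = (2 ^ Module.finrank ℝ V)⁻¹ := by
    rw [show (4 : ℝ) = 2 ^ (2 : ℝ) by norm_num, ← Real.rpow_mul two_pos.le, ← Real.rpow_natCast,
      ← Real.rpow_neg two_pos.le]
    congr 1
    ring
  rw [heatKernel, show 4 * π * (4 * a) = 4 * (4 * π * a) by ring,
    Real.mul_rpow (by norm_num) (by positivity), hfour, show 4 * (4 * a) = 16 * a by ring]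
  field_simp

lemma heatKernel_le {a : ℝ} (ha : 0 < a) (u : V) :
    heatKernel a u ≤ 2 ^ Module.finrank ℝ V * heatKernel (4 * a) u := by
  rw [two_pow_mul_heatKernel_four_mul ha, heatKernel]
  gcongr
  linarith

lemma abs_heatKernel_sub_heatKernel_le {a : ℝ} (ha : 0 < a) (u v : V) :
    |heatKernel a u - heatKernel a v| ≤
      2 ^ Module.finrank ℝ V * (‖u - v‖ / √a) * (heatKernel (4 * a) u + heatKernel (4 * a) v) := by
  have hsq : ∀ w : V, (‖w‖ / (2 * √a)) ^ 2 = ‖w‖ ^ 2 / (4 * a) := fun w => by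
    rw [div_pow, mul_pow, Real.sq_sqrt ha.le]
    norm_num
  have hquarter : ∀ w : V, ‖w‖ ^ 2 / (4 * a) / 4 = ‖w‖ ^ 2 / (16 * a) := fun w => by
    rw [div_div]
    ring_nf
  have hgauss := abs_exp_neg_sq_sub_exp_neg_sq_le (p := ‖u‖ / (2 * √a)) (q := ‖v‖ / (2 * √a))
    (by positivity) (by positivity)
  have hdist : 2 * |‖u‖ / (2 * √a) - ‖v‖ / (2 * √a)| ≤ ‖u - v‖ / √a := by
    rw [← sub_div, abs_div, abs_of_pos (show 0 < 2 * √a by positivity), mul_div_assoc',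
      mul_div_mul_left _ _ two_ne_zero]
    gcongr
    exact abs_norm_sub_norm_le u v
  simp only [hsq, hquarter] at hgauss
  set P := (4 * π * a) ^ (-(Module.finrank ℝ V / 2 : ℝ)) with hP
  have hP0 : 0 ≤ P := by positivity
  set G : V → ℝ := fun w => Real.exp (-(‖w‖ ^ 2 / (16 * a)))
  calc |heatKernel a u - heatKernel a v|
      = P * |Real.exp (-(‖u‖ ^ 2 / (4 * a))) - Real.exp (-(‖v‖ ^ 2 / (4 * a)))| := by
        rw [heatKernel, heatKernel, ← hP, ← mul_sub, abs_mul, abs_of_nonneg hP0]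
    _ ≤ P * (‖u - v‖ / √a * (G u + G v)) := by gcongr; exact hgauss.trans (by gcongr)
    _ = ‖u - v‖ / √a * (P * G u + P * G v) := by ring
    _ = _ := by
        simp only [G, hP, ← two_pow_mul_heatKernel_four_mul ha]
        ring

lemma hasDerivAt_heatKernel {t : ℝ} (ht : 0 < t) (u : V) :
    HasDerivAt (fun s => heatKernel s u)
      ((‖u‖ ^ 2 / (4 * t) - Module.finrank ℝ V / 2) / t * heatKernel t u) t := by
  have hlin : HasDerivAt (fun s : ℝ => 4 * π * s) (4 * π) t := by
    simpa using (hasDerivAt_id t).const_mul (4 * π)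
  have hpow := hlin.rpow_const (p := -(Module.finrank ℝ V / 2 : ℝ)) (.inl (by positivity))
  have hquot : HasDerivAt (fun s : ℝ => -(‖u‖ ^ 2 / (4 * s))) (‖u‖ ^ 2 / (4 * t) / t) t := by
    have h := ((hasDerivAt_inv ht.ne').const_mul (-(‖u‖ ^ 2 / 4)))
    refine (h.congr_deriv ?_).congr_of_eventuallyEq ?_
    · field_simp
    · exact .of_forall fun s => by simp only [div_mul_eq_div_div]; ring
  refine (hpow.mul hquot.exp).congr_deriv ?_
  rw [Real.rpow_sub_one (by positivity), heatKernel]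
  field_simp
  ring

lemma abs_deriv_heatKernel_le {a t : ℝ} (ha : 0 < a) (hat : a ≤ t) (hta : t ≤ 2 * a) (u : V) :
    |(‖u‖ ^ 2 / (4 * t) - Module.finrank ℝ V / 2) / t * heatKernel t u| ≤
      (Module.finrank ℝ V / 2 + 2) / a * (2 ^ Module.finrank ℝ V * heatKernel (4 * a) u) := by
  have ht : 0 < t := ha.trans_le hat
  rw [two_pow_mul_heatKernel_four_mul ha]
  generalize hd : (Module.finrank ℝ V : ℝ) = d
  have hd0 : 0 ≤ d := hd ▸ Nat.cast_nonneg _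
  set y := ‖u‖ ^ 2 / (4 * t) with hy
  have hy0 : 0 ≤ y := by positivity
  have hexp : (y + d / 2) * Real.exp (-y) ≤
      (d / 2 + 2) * Real.exp (-(‖u‖ ^ 2 / (16 * a))) := by
    have hle : Real.exp (-y) ≤ Real.exp (-(y / 2)) := Real.exp_le_exp.2 (by linarith)
    have hscale : ‖u‖ ^ 2 / (16 * a) ≤ y / 2 := by
      rw [hy, div_div]
      exact div_le_div_of_nonneg_left (by positivity) (by positivity) (by linarith)
    calc (y + d / 2) * Real.exp (-y) ≤ (d / 2 + 2) * Real.exp (-(y / 2)) := by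
          nlinarith [mul_exp_neg_le y]
      _ ≤ _ := by gcongr
  have hpow : (4 * π * t) ^ (-(d / 2)) ≤ (4 * π * a) ^ (-(d / 2)) :=
    Real.rpow_le_rpow_of_nonpos (by positivity) (by gcongr) (by linarith)
  have hsub : |y - d / 2| ≤ y + d / 2 := abs_le.2 ⟨by linarith, by linarith⟩
  calc |(y - d / 2) / t * heatKernel t u|
      = |y - d / 2| / t * heatKernel t u := by
        rw [abs_mul, abs_div, abs_of_pos ht, abs_of_nonneg (heatKernel_nonneg ht u)]
    _ ≤ (y + d / 2) / t * heatKernel t u := by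
        have := heatKernel_nonneg ht u
        gcongr
    _ = (4 * π * t) ^ (-(d / 2)) * ((y + d / 2) * Real.exp (-y)) / t := by
        rw [heatKernel, hd, ← hy]; ring
    _ ≤ (4 * π * a) ^ (-(d / 2)) * ((d / 2 + 2) * Real.exp (-(‖u‖ ^ 2 / (16 * a)))) / a := by
        gcongr
    _ = _ := by ring

lemma abs_heatKernel_sub_heatKernel_le_time {a b : ℝ} (ha : 0 < a) (hab : a ≤ b) (hb : b ≤ 2 * a)
    (u : V) :
    |heatKernel b u - heatKernel a u| ≤ (Module.finrank ℝ V / 2 + 2) * 2 ^ Module.finrank ℝ V *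
      ((b - a) / a) * heatKernel (4 * a) u := by
  have h := (convex_Icc a b).norm_image_sub_le_of_norm_hasDerivWithin_le
    (fun t ht => (hasDerivAt_heatKernel (ha.trans_le ht.1) u).hasDerivWithinAt)
    (fun t ht => abs_deriv_heatKernel_le ha ht.1 (ht.2.trans hb) u)
    (left_mem_Icc.2 hab) (right_mem_Icc.2 hab)
  rw [Real.norm_of_nonneg (sub_nonneg.2 hab)] at h
  refine h.trans_eq ?_
  ring

variable [MeasurableSpace V] [BorelSpace V] [FiniteDimensional ℝ V]

lemma integral_heatKernel {a : ℝ} (ha : 0 < a) : ∫ u : V, heatKernel a u = 1 := by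
  have hgauss := GaussianFourier.integral_rexp_neg_mul_sq_norm (V := V) (b := (4 * a)⁻¹)
    (by positivity)
  have hexp : ∀ u : V, Real.exp (-(‖u‖ ^ 2 / (4 * a))) = Real.exp (-(4 * a)⁻¹ * ‖u‖ ^ 2) :=
    fun u => by ring_nf
  simp only [heatKernel, integral_const_mul, hexp]
  rw [hgauss, div_inv_eq_mul, show π * (4 * a) = 4 * π * a by ring,
    ← Real.rpow_add (by positivity), neg_add_cancel, Real.rpow_zero]

lemma integrable_heatKernel {a : ℝ} (ha : 0 < a) : Integrable (heatKernel a : V → ℝ) :=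
  .of_integral_ne_zero (by rw [integral_heatKernel ha]; exact one_ne_zero)

/-! ### Heat potentials of sources with an inverse-square bound -/

lemma indicator_ball_inv_norm_sq {E : Type*} [SeminormedAddCommGroup E] (ξ : E) (ρ : ℝ) :
    (Metric.ball ξ ρ).indicator (fun z => (‖z - ξ‖ ^ 2)⁻¹) =
      fun z => (Iio ρ).indicator (fun y => (y ^ 2)⁻¹) ‖z - ξ‖ := by
  ext z
  simp only [indicator, mem_ball_iff_norm, mem_Iio]

lemma pow_smul_indicator_inv_sq (n : ℕ) (ρ : ℝ) {y : ℝ} (hy : y ∈ Ioi (0 : ℝ)) :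
    y ^ (n + 2) • (Iio ρ).indicator (fun y => (y ^ 2)⁻¹) y =
      (Ioo 0 ρ).indicator (fun y => y ^ n) y := by
  have hy : 0 < y := hy
  by_cases h : y < ρ
  · simp only [indicator, mem_Iio, mem_Ioo, h, hy, and_self, if_true, smul_eq_mul]
    field_simp
    ring
  · simp [indicator, h]

lemma integrableOn_ball_inv_norm_sq (hd : 2 < Module.finrank ℝ V) (ξ : V) (ρ : ℝ) :
    IntegrableOn (fun z => (‖z - ξ‖ ^ 2)⁻¹) (Metric.ball ξ ρ) := by
  have : Nontrivial V := Module.nontrivial_of_finrank_pos (R := ℝ) (by omega)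
  obtain ⟨n, hn⟩ := Nat.exists_eq_add_of_le' (show 3 ≤ Module.finrank ℝ V from hd)
  have h : Integrable fun z : V => (Iio ρ).indicator (fun y => (y ^ 2)⁻¹) ‖z‖ := by
    rw [integrable_fun_norm_addHaar, hn, Nat.add_succ_sub_one, integrableOn_congr_fun
      (fun y hy => pow_smul_indicator_inv_sq n ρ hy) measurableSet_Ioi]
    refine Integrable.integrableOn ((integrable_indicator_iff measurableSet_Ioo).2 ?_)
    exact (continuous_pow n).integrableOn_Icc.mono_set Ioo_subset_Icc_self
  rw [← integrable_indicator_iff Metric.isOpen_ball.measurableSet, indicator_ball_inv_norm_sq]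
  exact h.comp_sub_right ξ

lemma setIntegral_ball_inv_norm_sq (hd : 2 < Module.finrank ℝ V) (ξ : V) {ρ : ℝ} (hρ : 0 < ρ) :
    ∫ z in Metric.ball ξ ρ, (‖z - ξ‖ ^ 2)⁻¹ =
      Module.finrank ℝ V / (Module.finrank ℝ V - 2) *
        (volume : Measure V).real (Metric.ball 0 1) * ρ ^ (Module.finrank ℝ V - 2) := by
  have : Nontrivial V := Module.nontrivial_of_finrank_pos (R := ℝ) (by omega)
  obtain ⟨n, hn⟩ := Nat.exists_eq_add_of_le' (show 3 ≤ Module.finrank ℝ V from hd)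
  have hcast : ((n + 3 : ℕ) : ℝ) - 2 = n + 1 := by push_cast; ring
  rw [← integral_indicator Metric.isOpen_ball.measurableSet, indicator_ball_inv_norm_sq,
    integral_sub_right_eq_self (fun z : V => (Iio ρ).indicator (fun y => (y ^ 2)⁻¹) ‖z‖) ξ,
    integral_fun_norm_addHaar, hn, Nat.add_succ_sub_one,
    setIntegral_congr_fun measurableSet_Ioi (fun y hy => pow_smul_indicator_inv_sq n ρ hy),
    setIntegral_indicator measurableSet_Ioo, inter_eq_right.2 Ioo_subset_Ioi_self,
    ← integral_Ioc_eq_integral_Ioo, ← intervalIntegral.integral_of_le hρ.le, integral_pow,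
    show n + 3 - 2 = n + 1 by rfl, hcast, smul_eq_mul, nsmul_eq_mul, zero_pow n.succ_ne_zero]
  ring

lemma integrable_heatKernel_sub {a : ℝ} (ha : 0 < a) (y : V) :
    Integrable fun z => heatKernel a (y - z) :=
  (integrable_heatKernel ha).comp_sub_left y

lemma integral_heatKernel_sub {a : ℝ} (ha : 0 < a) (y : V) :
    ∫ z, heatKernel a (y - z) = 1 :=
  (integral_sub_left_eq_self (heatKernel a) volume y).trans (integral_heatKernel ha)

lemma integrable_heatKernel_sub_mul {a B : ℝ} (ha : 0 < a) (y : V) {f : V → ℝ} (hf : Measurable f)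
    (hB : ∀ z, |f z| ≤ B) : Integrable fun z => heatKernel a (y - z) * f z :=
  (integrable_heatKernel_sub ha y).mul_bdd hf.aestronglyMeasurable (.of_forall hB)

lemma inv_max_sq_le {r : ℝ} (hr : 0 < r) (s : ℝ) : (max r s ^ 2)⁻¹ ≤ (r ^ 2)⁻¹ := by
  gcongr
  exact le_max_left r s

lemma integrable_heatKernel_sub_mul_inv_max_sq {a r : ℝ} (ha : 0 < a) (hr : 0 < r) (y ξ : V) :
    Integrable fun z => heatKernel a (y - z) * (max r ‖z - ξ‖ ^ 2)⁻¹ :=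
  integrable_heatKernel_sub_mul (B := (r ^ 2)⁻¹) ha y (by fun_prop) fun z => by
    rw [abs_of_nonneg (by positivity)]
    exact inv_max_sq_le hr _

lemma integral_heatKernel_sub_mul_inv_max_sq_le_inv_sq {a r : ℝ} (ha : 0 < a) (hr : 0 < r)
    (y ξ : V) : ∫ z, heatKernel a (y - z) * (max r ‖z - ξ‖ ^ 2)⁻¹ ≤ (r ^ 2)⁻¹ :=
  calc ∫ z, heatKernel a (y - z) * (max r ‖z - ξ‖ ^ 2)⁻¹
      ≤ ∫ z, heatKernel a (y - z) * (r ^ 2)⁻¹ :=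
        integral_mono (integrable_heatKernel_sub_mul_inv_max_sq ha hr y ξ)
          ((integrable_heatKernel_sub ha y).mul_const _) fun z =>
          mul_le_mul_of_nonneg_left (inv_max_sq_le hr _) (heatKernel_nonneg ha _)
    _ = (r ^ 2)⁻¹ := by rw [integral_mul_const, integral_heatKernel_sub ha, one_mul]

-- The weight is at most `1/a` off the ball of radius `√a`, and the kernel is bounded on it.
lemma ae_heatKernel_sub_mul_inv_max_sq_le (hd : 2 < Module.finrank ℝ V) {a r : ℝ} (ha : 0 < a)
    (y ξ : V) : ∀ᵐ z, heatKernel a (y - z) * (max r ‖z - ξ‖ ^ 2)⁻¹ ≤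
      heatKernel a (y - z) * a⁻¹ + (4 * π * a) ^ (-(Module.finrank ℝ V / 2 : ℝ)) *
        (Metric.ball ξ √a).indicator (fun z => (‖z - ξ‖ ^ 2)⁻¹) z := by
  have : Nontrivial V := Module.nontrivial_of_finrank_pos (R := ℝ) (by omega)
  filter_upwards [compl_mem_ae_iff.2 (measure_singleton ξ)] with z (hz : z ≠ ξ)
  have hpos : 0 < ‖z - ξ‖ := norm_pos_iff.2 (sub_ne_zero.2 hz)
  have hnonneg := heatKernel_nonneg ha (y - z)
  by_cases hball : z ∈ Metric.ball ξ √a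
  · have hkernel : heatKernel a (y - z) ≤ (4 * π * a) ^ (-(Module.finrank ℝ V / 2 : ℝ)) :=
      mul_le_of_le_one_right (by positivity)
        (Real.exp_le_one_iff.2 (neg_nonpos.2 (by positivity)))
    rw [indicator_of_mem hball]
    refine le_add_of_nonneg_of_le (by positivity) ?_
    gcongr
    exact le_max_right _ _
  · rw [indicator_of_notMem hball, mul_zero, add_zero]
    rw [mem_ball_iff_norm, not_lt] at hball
    gcongr
    calc a = √a ^ 2 := (Real.sq_sqrt ha.le).symm
      _ ≤ max r ‖z - ξ‖ ^ 2 := by gcongr; exact hball.trans (le_max_right _ _)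

lemma mul_pow_sqrt_le_inv {n : ℕ} (hn : 2 ≤ n) {a : ℝ} (ha : 0 < a) :
    (4 * π * a) ^ (-(n / 2 : ℝ)) * √a ^ (n - 2) ≤ a⁻¹ := by
  have hfour : 1 ≤ 4 * π := by linarith [Real.pi_gt_three]
  have hsqrt : a ^ (n / 2 : ℝ) = √a ^ (n - 2) * a := by
    rw [Real.rpow_div_two_eq_sqrt _ ha.le, Real.rpow_natCast, ← Nat.sub_add_cancel hn, pow_add,
      Real.sq_sqrt ha.le, Nat.add_sub_cancel]
  calc (4 * π * a) ^ (-(n / 2 : ℝ)) * √a ^ (n - 2) ≤ a ^ (-(n / 2 : ℝ)) * √a ^ (n - 2) := by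
        gcongr ?_ * _
        exact Real.rpow_le_rpow_of_nonpos ha (by nlinarith) (by linarith [n.cast_nonneg (α := ℝ)])
    _ = a⁻¹ := by
        rw [Real.rpow_neg ha.le, hsqrt]
        field_simp

lemma exists_integral_heatKernel_sub_mul_inv_max_sq_le_inv (hd : 2 < Module.finrank ℝ V) :
    ∃ C > 0, ∀ {a r : ℝ}, 0 < a → 0 < r → ∀ y ξ : V,
      ∫ z, heatKernel a (y - z) * (max r ‖z - ξ‖ ^ 2)⁻¹ ≤ C / a := by
  set c : ℝ := Module.finrank ℝ V / (Module.finrank ℝ V - 2) *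
    (volume : Measure V).real (Metric.ball 0 1)
  have hc : 0 ≤ c := by
    have : (2 : ℝ) < Module.finrank ℝ V := mod_cast hd
    have : 0 < (Module.finrank ℝ V : ℝ) - 2 := by linarith
    positivity
  refine ⟨1 + c, by positivity, fun {a r} ha hr y ξ => ?_⟩
  have hball : Integrable ((Metric.ball ξ √a).indicator fun z => (‖z - ξ‖ ^ 2)⁻¹) :=
    (integrable_indicator_iff Metric.isOpen_ball.measurableSet).2
      (integrableOn_ball_inv_norm_sq hd ξ _)
  have hkernel := (integrable_heatKernel_sub ha y).mul_const a⁻¹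
  calc ∫ z, heatKernel a (y - z) * (max r ‖z - ξ‖ ^ 2)⁻¹
      ≤ ∫ z, (heatKernel a (y - z) * a⁻¹ + (4 * π * a) ^ (-(Module.finrank ℝ V / 2 : ℝ)) *
          (Metric.ball ξ √a).indicator (fun z => (‖z - ξ‖ ^ 2)⁻¹) z) :=
        integral_mono_ae (integrable_heatKernel_sub_mul_inv_max_sq ha hr y ξ)
          (hkernel.add (hball.const_mul _)) (ae_heatKernel_sub_mul_inv_max_sq_le hd ha y ξ)
    _ = a⁻¹ + c * ((4 * π * a) ^ (-(Module.finrank ℝ V / 2 : ℝ)) *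
          √a ^ (Module.finrank ℝ V - 2)) := by
        rw [integral_add hkernel (hball.const_mul _), integral_mul_const,
          integral_heatKernel_sub ha, integral_const_mul,
          integral_indicator Metric.isOpen_ball.measurableSet,
          setIntegral_ball_inv_norm_sq hd ξ (Real.sqrt_pos.2 ha)]
        ring
    _ ≤ a⁻¹ + c * a⁻¹ := by gcongr; exact mul_pow_sqrt_le_inv hd.le ha
    _ = (1 + c) / a := by ring

lemma le_two_mul_div_add {x C a b : ℝ} (ha : 0 < a) (hb : 0 < b) (hxa : x ≤ C / a)
    (hxb : x ≤ C / b) : x ≤ 2 * C / (a + b) := by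
  rw [le_div_iff₀ ha] at hxa
  rw [le_div_iff₀ hb] at hxb
  rw [le_div_iff₀ (by positivity)]
  linarith

lemma exists_integral_heatKernel_sub_mul_inv_max_sq_le (hd : 2 < Module.finrank ℝ V) :
    ∃ C > 0, ∀ {a r : ℝ}, 0 < a → 0 < r → ∀ y ξ : V,
      ∫ z, heatKernel a (y - z) * (max r ‖z - ξ‖ ^ 2)⁻¹ ≤ C / (a + r ^ 2) := by
  obtain ⟨C, hC, hCa⟩ := exists_integral_heatKernel_sub_mul_inv_max_sq_le_inv hd
  refine ⟨2 * max C 1, by positivity, fun {a r} ha hr y ξ =>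
    le_two_mul_div_add ha (by positivity) ((hCa ha hr y ξ).trans ?_)
      ((integral_heatKernel_sub_mul_inv_max_sq_le_inv_sq ha hr y ξ).trans ?_)⟩
  · gcongr
    exact le_max_left _ _
  · rw [inv_eq_one_div]
    gcongr
    exact le_max_right _ _

end HeatKernel

lemma nonneg_of_abs_le_div_max_sq {x N r s : ℝ} (hr : 0 < r) (h : |x| ≤ N / max r s ^ 2) :
    0 ≤ N :=
  ((le_div_iff₀ (by positivity)).1 h).trans' (by positivity)

/-- The decay, parabolic Lipschitz and time regularity, as functions of the elapsed time `a`, of a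
heat potential whose source is bounded by an inverse square truncated at the radius `r`. -/
structure HeatEstimates {V : Type*} [NormedAddCommGroup V] (u : ℝ → V → ℝ) (K r : ℝ) : Prop where
  abs_le : ∀ {a : ℝ}, 0 < a → ∀ y, |u a y| ≤ K / (a + r ^ 2)
  abs_sub_le_space : ∀ {a : ℝ}, 0 < a → ∀ y y',
    |u a y' - u a y| ≤ K * (‖y' - y‖ / √a) / (a + r ^ 2)
  abs_sub_le_time : ∀ {a b : ℝ}, 0 < a → a ≤ b → b ≤ 2 * a → ∀ y,
    |u b y - u a y| ≤ K * ((b - a) / a) / (a + r ^ 2)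

namespace HeatEstimates

variable {V : Type*} [NormedAddCommGroup V] {u v : ℝ → V → ℝ} {K L r : ℝ}

lemma add (hu : HeatEstimates u K r) (hv : HeatEstimates v L r) :
    HeatEstimates (fun a y => u a y + v a y) (K + L) r where
  abs_le ha y := by
    rw [add_div]
    exact (abs_add_le _ _).trans (add_le_add (hu.abs_le ha y) (hv.abs_le ha y))
  abs_sub_le_space ha y y' := by
    rw [add_sub_add_comm, add_mul, add_div]
    exact (abs_add_le _ _).trans
      (add_le_add (hu.abs_sub_le_space ha y y') (hv.abs_sub_le_space ha y y'))
  abs_sub_le_time ha hab hb y := by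
    rw [add_sub_add_comm, add_mul, add_div]
    exact (abs_add_le _ _).trans
      (add_le_add (hu.abs_sub_le_time ha hab hb y) (hv.abs_sub_le_time ha hab hb y))

lemma comp_isometry (hu : HeatEstimates u K r) {φ : V → V} (hφ : Isometry φ) :
    HeatEstimates (fun a y => u a (φ y)) K r where
  abs_le ha y := hu.abs_le ha (φ y)
  abs_sub_le_space ha y y' := by
    simpa only [← dist_eq_norm, hφ.dist_eq] using hu.abs_sub_le_space ha (φ y) (φ y')
  abs_sub_le_time ha hab hb y := hu.abs_sub_le_time ha hab hb (φ y)

lemma congr (hu : HeatEstimates u K r) (h : ∀ a : ℝ, 0 < a → v a = u a) :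
    HeatEstimates v K r where
  abs_le ha y := by
    rw [h _ ha]
    exact hu.abs_le ha y
  abs_sub_le_space ha y y' := by
    rw [h _ ha]
    exact hu.abs_sub_le_space ha y y'
  abs_sub_le_time ha hab hb y := by
    rw [h _ ha, h _ (ha.trans_le hab)]
    exact hu.abs_sub_le_time ha hab hb y

end HeatEstimates

section HeatPotential

variable {V : Type*} [NormedAddCommGroup V] [InnerProductSpace ℝ V] [MeasurableSpace V]
  [BorelSpace V] [FiniteDimensional ℝ V] {f : V → ℝ} {N r : ℝ} {ξ : V}

/-- The convolution of `f` with the heat kernel at time `a`. -/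
def heatPotential (f : V → ℝ) (a : ℝ) (y : V) : ℝ := ∫ z, heatKernel a (y - z) * f z

lemma integrable_heatKernel_sub_mul_of_abs_le (hf : Measurable f) (hr : 0 < r)
    (hN : ∀ z, |f z| ≤ N / max r ‖z - ξ‖ ^ 2) {a : ℝ} (ha : 0 < a) (y : V) :
    Integrable fun z => heatKernel a (y - z) * f z := by
  have hN0 := nonneg_of_abs_le_div_max_sq hr (hN ξ)
  refine integrable_heatKernel_sub_mul (B := N / r ^ 2) ha y hf fun z => (hN z).trans ?_
  gcongr
  exact le_max_left _ _

lemma exists_abs_integral_mul_le_of_kernel_le (hd : 2 < Module.finrank ℝ V) :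
    ∃ C > 0, ∀ {f : V → ℝ} {N r : ℝ} {ξ : V}, 0 < r → (∀ z, |f z| ≤ N / max r ‖z - ξ‖ ^ 2) →
      ∀ {a c : ℝ} {k : V → ℝ} {y y' : V}, 0 < a → 0 ≤ c →
        (∀ z, |k z| ≤ c * (heatKernel (4 * a) (y - z) + heatKernel (4 * a) (y' - z))) →
        |∫ z, k z * f z| ≤ C * N * c / (a + r ^ 2) := by
  obtain ⟨C, hC, hW⟩ := exists_integral_heatKernel_sub_mul_inv_max_sq_le (V := V) hd
  refine ⟨2 * C, by positivity, fun {f N r ξ} hr hN {a c k y y'} ha hc hk => ?_⟩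
  have hN0 := nonneg_of_abs_le_div_max_sq hr (hN ξ)
  have h4a : 0 < 4 * a := by positivity
  set w : V → V → ℝ := fun y z => heatKernel (4 * a) (y - z) * (max r ‖z - ξ‖ ^ 2)⁻¹
  have hint : ∀ y, Integrable (w y) := fun y =>
    integrable_heatKernel_sub_mul_inv_max_sq h4a hr y ξ
  have hle : ∀ y, ∫ z, w y z ≤ C / (a + r ^ 2) := fun y =>
    (hW h4a hr y ξ).trans (by gcongr; linarith)
  calc |∫ z, k z * f z| ≤ ∫ z, c * N * (w y z + w y' z) := by
        rw [← Real.norm_eq_abs]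
        refine norm_integral_le_of_norm_le
          (((hint y).add (hint y')).const_mul (c * N)) (.of_forall fun z => ?_)
        calc ‖k z * f z‖ ≤ c * (heatKernel (4 * a) (y - z) + heatKernel (4 * a) (y' - z)) *
              (N / max r ‖z - ξ‖ ^ 2) := by
              rw [norm_mul]
              exact mul_le_mul (hk z) (hN z) (abs_nonneg _) ((abs_nonneg _).trans (hk z))
          _ = _ := by ring
    _ ≤ c * N * (C / (a + r ^ 2) + C / (a + r ^ 2)) := by
        rw [integral_const_mul, integral_add (hint y) (hint y')]
        gcongr
        exacts [hle y, hle y']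
    _ = 2 * C * N * c / (a + r ^ 2) := by ring

theorem exists_heatEstimates_heatPotential (hd : 2 < Module.finrank ℝ V) :
    ∃ C > 0, ∀ {f : V → ℝ} {N r : ℝ} {ξ : V}, Measurable f → 0 < r →
      (∀ z, |f z| ≤ N / max r ‖z - ξ‖ ^ 2) → HeatEstimates (heatPotential f) (C * N) r := by
  obtain ⟨C, hC, hbound⟩ := exists_abs_integral_mul_le_of_kernel_le (V := V) hd
  set D : ℝ := (Module.finrank ℝ V / 2 + 2) * 2 ^ Module.finrank ℝ V
  have hD : 2 ^ Module.finrank ℝ V ≤ D :=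
    le_mul_of_one_le_left (by positivity)
      (by linarith [(Module.finrank ℝ V).cast_nonneg (α := ℝ)])
  refine ⟨C * D, by positivity, fun {f N r ξ} hf hr hN => ?_⟩
  have hint := fun {a : ℝ} (ha : 0 < a) y => integrable_heatKernel_sub_mul_of_abs_le hf hr hN ha y
  have hpos := fun {a : ℝ} (ha : 0 < a) (u : V) => heatKernel_nonneg (mul_pos four_pos ha) u
  refine ⟨fun {a} ha y => ?_, fun {a} ha y y' => ?_, fun {a b} ha hab hb y => ?_⟩
  · refine (hbound hr hN ha (c := D) (y := y) (y' := y) (by positivity) fun z => ?_).trans_eq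
      (by ring)
    rw [abs_of_nonneg (heatKernel_nonneg ha _)]
    exact (heatKernel_le ha _).trans (mul_le_mul hD (le_add_of_nonneg_left (hpos ha _))
      (hpos ha _) (by positivity))
  · rw [heatPotential, heatPotential, ← integral_sub (hint ha y') (hint ha y)]
    simp only [← sub_mul]
    refine (hbound hr hN ha (c := D * (‖y' - y‖ / √a)) (y := y') (y' := y) (by positivity)
      fun z => ?_).trans_eq (by ring)
    have h := abs_heatKernel_sub_heatKernel_le ha (y' - z) (y - z)
    rw [sub_sub_sub_cancel_right] at h
    refine h.trans (mul_le_mul_of_nonneg_right (by gcongr) (add_nonneg (hpos ha _) (hpos ha _)))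
  · rw [heatPotential, heatPotential, ← integral_sub (hint (ha.trans_le hab) y) (hint ha y)]
    simp only [← sub_mul]
    refine (hbound hr hN ha (c := D * ((b - a) / a)) (y := y) (y' := y) (by positivity)
      fun z => (abs_heatKernel_sub_heatKernel_le_time ha hab hb _).trans ?_).trans_eq (by ring)
    exact mul_le_mul_of_nonneg_left (le_add_of_nonneg_left (hpos ha _)) (by positivity)

end HeatPotential

/-! ### The Neumann kernel of the half-space -/

/-- The reflection `x ↦ x̄ = (x̃, -x₄)` of `ℝ⁴` in the boundary of the half-space. -/
def reflect (x : E4) : E4 := !₂[x 0, x 1, x 2, -x 3]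

lemma isometry_reflect : Isometry reflect := by
  refine Isometry.of_dist_eq fun x y => ?_
  simp only [EuclideanSpace.dist_eq, Fin.sum_univ_four, reflect, Real.dist_eq, sq_abs]
  congr 1
  simp
  ring

lemma norm_reflect_sub_sq (x z : E4) : ‖reflect x - z‖ ^ 2 =
    (x 0 - z 0) ^ 2 + (x 1 - z 1) ^ 2 + (x 2 - z 2) ^ 2 + (x 3 + z 3) ^ 2 := by
  rw [EuclideanSpace.norm_sq_eq]
  simp [Fin.sum_univ_four, reflect]
  ring

lemma heatK_eq (a : ℝ) (x z : E4) :
    heatK a x z = heatKernel a (x - z) + heatKernel a (reflect x - z) := by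
  have hpow : (4 * π * a) ^ (-(Module.finrank ℝ E4 / 2 : ℝ)) = 1 / (4 * π * a) ^ 2 := by
    rw [finrank_euclideanSpace_fin, show (-((4 : ℕ) / 2 : ℝ)) = ((-2 : ℤ) : ℝ) by norm_num,
      Real.rpow_intCast, zpow_neg, one_div]
    rfl
  rw [heatK, heatKernel, heatKernel, hpow, norm_reflect_sub_sq, neg_div, neg_div, mul_add]

lemma measurableSet_halfSpace : MeasurableSet halfSpace := by
  unfold halfSpace
  exact measurableSet_lt measurable_const (by fun_prop)

/-- The solution at time `a` of the Neumann heat flow in the half-space started at `f`. -/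
def neumannPotential (f : E4 → ℝ) (a : ℝ) (x : E4) : ℝ := ∫ z in halfSpace, heatK a x z * f z

lemma neumannPotential_eq {f : E4 → ℝ} {B a : ℝ} (ha : 0 < a) (hf : Measurable f)
    (hB : ∀ z ∈ halfSpace, |f z| ≤ B) (x : E4) :
    neumannPotential f a x = heatPotential (halfSpace.indicator f) a x +
      heatPotential (halfSpace.indicator f) a (reflect x) := by
  have hbound : ∀ z, |halfSpace.indicator f z| ≤ max B 0 := fun z => by
    by_cases hz : z ∈ halfSpace
    · rw [indicator_of_mem hz]
      exact (hB z hz).trans (le_max_left _ _)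
    · simp [indicator_of_notMem hz]
  have hint := fun y : E4 =>
    integrable_heatKernel_sub_mul ha y (hf.indicator measurableSet_halfSpace) hbound
  rw [neumannPotential, heatPotential, heatPotential, ← integral_add (hint x) (hint (reflect x)),
    ← integral_indicator measurableSet_halfSpace]
  congr with z
  by_cases hz : z ∈ halfSpace
  · simp only [indicator_of_mem hz, heatK_eq, add_mul]
  · simp only [indicator_of_notMem hz, mul_zero, add_zero]

theorem exists_heatEstimates_neumannPotential :
    ∃ C > 0, ∀ {f : E4 → ℝ} {N r : ℝ} {ξ : E4}, Measurable f → 0 ≤ N → 0 < r →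
      (∀ z ∈ halfSpace, |f z| ≤ N / max r ‖z - ξ‖ ^ 2) →
        HeatEstimates (neumannPotential f) (C * N) r := by
  obtain ⟨C, hC, h⟩ := exists_heatEstimates_heatPotential (V := E4)
    (by rw [finrank_euclideanSpace_fin]; norm_num)
  refine ⟨C + C, by positivity, fun {f N r ξ} hf hN0 hr hN => ?_⟩
  have hest : HeatEstimates (heatPotential (halfSpace.indicator f)) (C * N) r :=
    h (hf.indicator measurableSet_halfSpace) hr fun z => by
      by_cases hz : z ∈ halfSpace
      · rw [indicator_of_mem hz]
        exact hN z hz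
      · rw [indicator_of_notMem hz, abs_zero]
        positivity
  rw [add_mul]
  refine (hest.add (hest.comp_isometry isometry_reflect)).congr fun a ha => funext fun x => ?_
  refine neumannPotential_eq (B := N / r ^ 2) ha hf (fun z hz => (hN z hz).trans ?_) x
  gcongr
  exact le_max_left _ _

lemma measurable_heatK : Measurable fun p : ℝ × E4 × E4 => heatK p.1 p.2.1 p.2.2 := by
  unfold heatK
  fun_prop

lemma measurable_neumannPotential {g : E4 → ℝ → ℝ} (hg : Measurable (Function.uncurry g)) (T : ℝ)
    (x : E4) : Measurable fun p : ℝ × ℝ => neumannPotential (fun z => g z (T - p.1)) p.2 x := by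
  have h : Measurable fun q : (ℝ × ℝ) × E4 => heatK q.1.2 x q.2 * g q.2 (T - q.1.1) :=
    (measurable_heatK.comp
      (by fun_prop : Measurable fun q : (ℝ × ℝ) × E4 => (q.1.2, x, q.2))).mul
      (hg.comp (by fun_prop : Measurable fun q : (ℝ × ℝ) × E4 => (q.2, T - q.1.1)))
  exact (h.stronglyMeasurable.integral_prod_right (ν := volume.restrict halfSpace)).measurable

/-! ### Integrals over the elapsed time -/

lemma abs_intervalIntegral_le_setIntegral_add {f h₁ h₂ : ℝ → ℝ} {c t : ℝ} (ht : 0 ≤ t)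
    (h₁_int : IntegrableOn h₁ (Ioc 0 c)) (h₂_int : IntegrableOn h₂ (Ioi c))
    (h₁_nonneg : ∀ a ∈ Ioc 0 c, 0 ≤ h₁ a) (h₂_nonneg : ∀ a ∈ Ioi c, 0 ≤ h₂ a)
    (hf₁ : ∀ a ∈ Ioo 0 t, a ≤ c → |f a| ≤ h₁ a) (hf₂ : ∀ a ∈ Ioo 0 t, c < a → |f a| ≤ h₂ a) :
    |∫ a in (0 : ℝ)..t, f a| ≤ (∫ a in Ioc 0 c, h₁ a) + ∫ a in Ioi c, h₂ a := by
  have hi₁ := (integrable_indicator_iff measurableSet_Ioc).2 h₁_int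
  have hi₂ := (integrable_indicator_iff measurableSet_Ioi).2 h₂_int
  have hnonneg : ∀ a, 0 ≤ (Ioc 0 c).indicator h₁ a + (Ioi c).indicator h₂ a := fun a =>
    add_nonneg (indicator_nonneg h₁_nonneg a) (indicator_nonneg h₂_nonneg a)
  rw [intervalIntegral.integral_of_le ht, integral_Ioc_eq_integral_Ioo, ← Real.norm_eq_abs,
    ← integral_indicator measurableSet_Ioc, ← integral_indicator measurableSet_Ioi,
    ← integral_add hi₁ hi₂]
  refine (norm_integral_le_of_norm_le (hi₁.add hi₂).integrableOn ?_).trans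
    (setIntegral_le_integral (hi₁.add hi₂) (.of_forall hnonneg))
  filter_upwards [ae_restrict_mem measurableSet_Ioo] with a ha
  rcases le_or_gt a c with hac | hca
  · simpa [indicator, ha.1, hac, hac.not_gt] using hf₁ a ha hac
  · simpa [indicator, hca, hca.not_ge] using hf₂ a ha hca

lemma integrableOn_Ioc_div_rpow {e s : ℝ} (he : 0 < e) (hs : -1 < s) :
    IntegrableOn (fun a => (a / e) ^ s) (Ioc 0 e) := by
  refine IntegrableOn.congr_fun (((intervalIntegrable_iff_integrableOn_Ioc_of_le he.le).1
    (intervalIntegral.intervalIntegrable_rpow' hs)).div_const (e ^ s))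
    (fun a ha => (Real.div_rpow ha.1.le he.le s).symm) measurableSet_Ioc

lemma setIntegral_Ioc_div_rpow {e s : ℝ} (he : 0 < e) (hs : -1 < s) :
    ∫ a in Ioc 0 e, (a / e) ^ s = e / (s + 1) := by
  have hs' : 0 < s + 1 := by linarith
  rw [setIntegral_congr_fun measurableSet_Ioc fun a ha => Real.div_rpow ha.1.le he.le s,
    integral_div, ← intervalIntegral.integral_of_le he.le, integral_rpow (.inl hs),
    Real.zero_rpow hs'.ne', Real.rpow_add_one he.ne']
  field_simp
  ring

lemma integrableOn_Ioi_div_rpow {e s : ℝ} (he : 0 < e) (hs : s < -1) :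
    IntegrableOn (fun a => (a / e) ^ s) (Ioi e) :=
  IntegrableOn.congr_fun ((integrableOn_Ioi_rpow_of_lt hs he).div_const (e ^ s))
    (fun _ ha => (Real.div_rpow (he.trans ha).le he.le s).symm) measurableSet_Ioi

lemma setIntegral_Ioi_div_rpow {e s : ℝ} (he : 0 < e) (hs : s < -1) :
    ∫ a in Ioi e, (a / e) ^ s = e / (-s - 1) := by
  rw [setIntegral_congr_fun measurableSet_Ioi fun a ha => Real.div_rpow (he.trans ha).le he.le s,
    integral_div, integral_Ioi_rpow_of_lt hs he, Real.rpow_add_one he.ne',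
    show -s - 1 = -(s + 1) by ring, div_neg]
  field_simp

/-- A positive weight on `(0, T]` comparable to powers in the sense of Potter's bounds: it varies
at least like the power `ν` and at most like the power `κ`. -/
structure IsPotterWeight (m : ℝ → ℝ) (ν κ T : ℝ) : Prop where
  pos : ∀ {σ : ℝ}, 0 < σ → σ ≤ T → 0 < m σ
  le_mul_rpow_of_le : ∀ {σ τ : ℝ}, 0 < σ → σ ≤ τ → τ ≤ T → m σ ≤ m τ * (σ / τ) ^ ν
  le_mul_rpow_of_ge : ∀ {σ τ : ℝ}, 0 < τ → τ ≤ σ → σ ≤ T → m σ ≤ m τ * (σ / τ) ^ κ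

namespace IsPotterWeight

variable {m : ℝ → ℝ} {ν κ T σ τ a e : ℝ}

lemma mono (hm : IsPotterWeight m ν κ T) (hν : 0 ≤ ν) (hσ : 0 < σ) (hστ : σ ≤ τ) (hτ : τ ≤ T) :
    m σ ≤ m τ :=
  (hm.le_mul_rpow_of_le hσ hστ hτ).trans <|
    mul_le_of_le_one_right (hm.pos (hσ.trans_le hστ) hτ).le <|
      Real.rpow_le_one (div_nonneg hσ.le (hσ.trans_le hστ).le)
        ((div_le_one (hσ.trans_le hστ)).2 hστ) hν

lemma le_two_mul_rpow (hm : IsPotterWeight m ν κ T) (hκ : κ ∈ Icc 0 1) (he : 0 < e)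
    (hea : e ≤ a) (heτ : e ≤ τ) (haT : τ + a ≤ T) : m (τ + a) ≤ 2 * m τ * (a / e) ^ κ := by
  have hτ : 0 < τ := he.trans_le heτ
  have ha : 0 < a := he.trans_le hea
  have hratio : (τ + a) / τ ≤ 2 * (a / e) := by
    have h₁ : 1 ≤ a / e := (one_le_div he).2 hea
    have h₂ : a / τ ≤ a / e := by gcongr
    rw [add_div, div_self hτ.ne']
    linarith
  have hpow : ((τ + a) / τ) ^ κ ≤ 2 * (a / e) ^ κ :=
    calc ((τ + a) / τ) ^ κ ≤ (2 * (a / e)) ^ κ :=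
          Real.rpow_le_rpow (by positivity) hratio hκ.1
      _ = 2 ^ κ * (a / e) ^ κ := Real.mul_rpow two_pos.le (by positivity)
      _ ≤ 2 * (a / e) ^ κ := by
          gcongr
          exact Real.rpow_le_self_of_one_le one_le_two hκ.2
  have hpos := hm.pos hτ (by linarith)
  calc m (τ + a) ≤ m τ * ((τ + a) / τ) ^ κ := hm.le_mul_rpow_of_ge hτ (by linarith) haT
    _ ≤ m τ * (2 * (a / e) ^ κ) := by gcongr
    _ = 2 * m τ * (a / e) ^ κ := by ring

lemma le_two_mul (hm : IsPotterWeight m ν κ T) (hκ : κ ∈ Icc 0 1) (ha : 0 < a) (haτ : a ≤ τ)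
    (haT : τ + a ≤ T) : m (τ + a) ≤ 2 * m τ := by
  simpa only [div_self ha.ne', Real.one_rpow, mul_one] using
    hm.le_two_mul_rpow hκ ha le_rfl haτ haT

end IsPotterWeight

lemma integrableOn_Ioc_inv_add {Q c : ℝ} (hQ : 0 < Q) :
    IntegrableOn (fun a => (a + Q)⁻¹) (Ioc 0 c) := by
  refine (ContinuousOn.integrableOn_Icc fun a ha => ?_).mono_set Ioc_subset_Icc_self
  have : a + Q ≠ 0 := by linarith [ha.1]
  fun_prop (disch := assumption)

lemma setIntegral_Ioc_inv_add {Q c : ℝ} (hQ : 0 < Q) (hc : 0 ≤ c) :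
    ∫ a in Ioc 0 c, (a + Q)⁻¹ = Real.log ((c + Q) / Q) := by
  rw [← intervalIntegral.integral_of_le hc,
    intervalIntegral.integral_comp_add_right (fun a => a⁻¹), zero_add,
    integral_inv_of_pos hQ (by positivity)]

/-- A family of heat potentials whose source at the remaining time `σ` has size `K * m σ` and
truncation radius `ρ σ`; `v σ a x` is the potential of that source after the elapsed time `a`. -/
structure WeightedHeatFamily {V : Type*} [NormedAddCommGroup V] (v : ℝ → ℝ → V → ℝ) (m ρ : ℝ → ℝ)
    (K T : ℝ) : Prop where
  radius_pos : ∀ σ ∈ Ioc 0 T, 0 < ρ σ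
  radius_mono : MonotoneOn ρ (Ioc 0 T)
  heatEstimates : ∀ σ ∈ Ioo 0 T, HeatEstimates (v σ) (K * m σ) (ρ σ)
  measurable : ∀ x, Measurable fun p : ℝ × ℝ => v p.1 p.2 x

/-- The superposition of a family of heat potentials, evaluated when the time `τ` remains: the
source that acted when `τ + a` remained has evolved for the time `a`. -/
def lagIntegral {V : Type*} (v : ℝ → ℝ → V → ℝ) (T τ : ℝ) (x : V) : ℝ :=
  ∫ a in (0 : ℝ)..T - τ, v (τ + a) a x

namespace WeightedHeatFamily

variable {V : Type*} [NormedAddCommGroup V] {v : ℝ → ℝ → V → ℝ} {m ρ : ℝ → ℝ} {ν κ K T τ : ℝ}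

lemma abs_le_of_terminal (hv : WeightedHeatFamily v m ρ K T) (hm : IsPotterWeight m ν κ T)
    (hK : 0 ≤ K) {a : ℝ} (ha : a ∈ Ioo 0 τ) (hτ : τ ≤ T) (x : V) :
    |v a a x| ≤ K * m τ / τ * (a / τ) ^ (ν - 1) := by
  obtain ⟨ha0, haτ⟩ := ha
  have hτ0 : 0 < τ := ha0.trans haτ
  have hma := hm.pos ha0 (haτ.le.trans hτ)
  calc |v a a x| ≤ K * m a / (a + ρ a ^ 2) :=
        (hv.heatEstimates a ⟨ha0, haτ.trans_le hτ⟩).abs_le ha0 x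
    _ ≤ K * m a / a := by
        gcongr
        exact le_add_of_nonneg_right (sq_nonneg _)
    _ ≤ K * (m τ * (a / τ) ^ ν) / a := by
        gcongr
        exact hm.le_mul_rpow_of_le ha0 haτ.le hτ
    _ = K * m τ / τ * (a / τ) ^ (ν - 1) := by
        rw [Real.rpow_sub_one (by positivity)]
        field_simp

lemma intervalIntegrable_terminal (hv : WeightedHeatFamily v m ρ K T)
    (hm : IsPotterWeight m ν κ T) (hK : 0 ≤ K) (hν : 0 < ν) (hT : 0 < T) (x : V) :
    IntervalIntegrable (fun a => v a a x) volume 0 T := by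
  rw [intervalIntegrable_iff_integrableOn_Ioo_of_le hT.le]
  refine Integrable.mono' (((integrableOn_Ioc_div_rpow hT
    (show -1 < ν - 1 by linarith)).mono_set
    Ioo_subset_Ioc_self).const_mul (K * m T / T))
    ((hv.measurable x).comp (by fun_prop : Measurable fun a : ℝ => (a, a))).aestronglyMeasurable ?_
  filter_upwards [ae_restrict_mem measurableSet_Ioo] with a ha
  exact hv.abs_le_of_terminal hm hK ha le_rfl x

lemma abs_integral_terminal_le (hv : WeightedHeatFamily v m ρ K T) (hm : IsPotterWeight m ν κ T)
    (hK : 0 ≤ K) (hν : 0 < ν) (hτ : τ ∈ Ioc 0 T) (x : V) :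
    |∫ a in (0 : ℝ)..τ, v a a x| ≤ K * m τ / ν := by
  have hmτ := hm.pos hτ.1 hτ.2
  have h := abs_intervalIntegral_le_setIntegral_add (f := fun a => v a a x)
    (h₁ := fun a => K * m τ / τ * (a / τ) ^ (ν - 1)) (h₂ := 0) hτ.1.le
    ((integrableOn_Ioc_div_rpow hτ.1 (by linarith)).const_mul _) integrableOn_zero
    (fun a ha => mul_nonneg (div_nonneg (by positivity) hτ.1.le)
      (Real.rpow_nonneg (div_nonneg ha.1.le hτ.1.le) _))
    (fun a _ => le_rfl) (fun a ha _ => hv.abs_le_of_terminal hm hK ha hτ.2 x)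
    (fun a ha hτa => absurd hτa ha.2.not_gt)
  refine h.trans_eq ?_
  have := hτ.1
  simp only [integral_const_mul, setIntegral_Ioc_div_rpow hτ.1 (show -1 < ν - 1 by linarith),
    sub_add_cancel, Pi.zero_apply, integral_zero, add_zero]
  field_simp

lemma intervalIntegrable_lag (hv : WeightedHeatFamily v m ρ K T) (hm : IsPotterWeight m ν κ T)
    (hK : 0 ≤ K) (hν : 0 ≤ ν) (hτ : τ ∈ Ioo 0 T) (x : V) :
    IntervalIntegrable (fun a => v (τ + a) a x) volume 0 (T - τ) := by
  rw [intervalIntegrable_iff_integrableOn_Ioo_of_le (by linarith [hτ.2])]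
  refine Measure.integrableOn_of_bounded (M := K * m T / ρ τ ^ 2) measure_Ioo_lt_top.ne
    ((hv.measurable x).comp
      (by fun_prop : Measurable fun a : ℝ => (τ + a, a))).aestronglyMeasurable ?_
  filter_upwards [ae_restrict_mem measurableSet_Ioo] with a ⟨ha, haT⟩
  have hσ : τ + a ∈ Ioo 0 T := ⟨by linarith [hτ.1], by linarith⟩
  have hρτ := hv.radius_pos τ ⟨hτ.1, hτ.2.le⟩
  have hmT := hm.pos (hτ.1.trans hτ.2) le_rfl
  refine ((hv.heatEstimates _ hσ).abs_le ha x).trans ?_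
  gcongr
  · exact hm.mono hν hσ.1 hσ.2.le le_rfl
  · exact (pow_le_pow_left₀ hρτ.le
      (hv.radius_mono ⟨hτ.1, hτ.2.le⟩ ⟨hσ.1, hσ.2.le⟩ (by linarith)) 2).trans
      (le_add_of_nonneg_left ha.le)

lemma abs_lag_sub_terminal_le_near (hv : WeightedHeatFamily v m ρ K T)
    (hm : IsPotterWeight m ν κ T) (hK : 0 ≤ K) (hκ : κ ∈ Icc 0 1) {a : ℝ} (ha : 0 < a) (haτ : a ≤ τ)
    (haT : τ + a < T) (x : V) :
    |v (τ + a) a x - v (τ + a) (τ + a) x| ≤ 4 * K * m τ * (a + ρ τ ^ 2)⁻¹ := by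
  have hσ : τ + a ∈ Ioo 0 T := ⟨by linarith, haT⟩
  have hτ : τ ∈ Ioc 0 T := ⟨ha.trans_le haτ, by linarith⟩
  have hρτ := hv.radius_pos τ hτ
  have hmτ := hm.pos hτ.1 hτ.2
  have hest := hv.heatEstimates _ hσ
  have hle : ∀ b, a ≤ b → |v (τ + a) b x| ≤ K * (2 * m τ) / (a + ρ τ ^ 2) := fun b hab => by
    refine (hest.abs_le (ha.trans_le hab) x).trans ?_
    gcongr
    · exact hm.le_two_mul hκ ha haτ haT.le
    · exact hv.radius_mono hτ ⟨hσ.1, haT.le⟩ (by linarith)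
  calc |v (τ + a) a x - v (τ + a) (τ + a) x|
      ≤ |v (τ + a) a x| + |v (τ + a) (τ + a) x| := abs_sub _ _
    _ ≤ K * (2 * m τ) / (a + ρ τ ^ 2) + K * (2 * m τ) / (a + ρ τ ^ 2) :=
        add_le_add (hle a le_rfl) (hle (τ + a) (by linarith [hτ.1]))
    _ = 4 * K * m τ * (a + ρ τ ^ 2)⁻¹ := by ring

lemma abs_lag_sub_terminal_le_far (hv : WeightedHeatFamily v m ρ K T)
    (hm : IsPotterWeight m ν κ T) (hK : 0 ≤ K) (hκ : κ ∈ Icc 0 1) {a : ℝ} (hτ : 0 < τ)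
    (hτa : τ ≤ a) (haT : τ + a < T) (x : V) :
    |v (τ + a) a x - v (τ + a) (τ + a) x| ≤ 2 * K * m τ / τ * (a / τ) ^ (κ - 2) := by
  have ha : 0 < a := hτ.trans_le hτa
  have hσ : τ + a ∈ Ioo 0 T := ⟨by linarith, haT⟩
  have hmσ := hm.pos hσ.1 haT.le
  rw [abs_sub_comm]
  calc |v (τ + a) (τ + a) x - v (τ + a) a x|
      ≤ K * m (τ + a) * ((τ + a - a) / a) / (a + ρ (τ + a) ^ 2) :=
        (hv.heatEstimates _ hσ).abs_sub_le_time ha (by linarith) (by linarith) x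
    _ ≤ K * m (τ + a) * (τ / a) / a := by
        rw [add_sub_cancel_right]
        gcongr
        exact le_add_of_nonneg_right (sq_nonneg _)
    _ ≤ K * (2 * m τ * (a / τ) ^ κ) * (τ / a) / a := by
        gcongr
        exact hm.le_two_mul_rpow hκ hτ hτa le_rfl haT.le
    _ = 2 * K * m τ / τ * (a / τ) ^ (κ - 2) := by
        rw [Real.rpow_sub (by positivity), Real.rpow_two]
        field_simp

theorem abs_integral_lag_sub_terminal_le (hv : WeightedHeatFamily v m ρ K T)
    (hm : IsPotterWeight m ν κ T) (hK : 0 ≤ K) (hκ : κ ∈ Ico 0 1) (hτ : τ ∈ Ioo 0 T) (x : V) :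
    |∫ a in (0 : ℝ)..T - τ, (v (τ + a) a x - v (τ + a) (τ + a) x)| ≤
      K * m τ * (4 * Real.log ((τ + ρ τ ^ 2) / ρ τ ^ 2) + 2 / (1 - κ)) := by
  have hτ' : τ ∈ Ioc 0 T := ⟨hτ.1, hτ.2.le⟩
  have hρτ := pow_pos (hv.radius_pos τ hτ') 2
  have hmτ := hm.pos hτ.1 hτ.2.le
  have hκ' : κ ∈ Icc 0 1 := ⟨hκ.1, hκ.2.le⟩
  have hs : κ - 2 < -1 := by linarith [hκ.2]
  have h := abs_intervalIntegral_le_setIntegral_add (sub_nonneg.2 hτ.2.le)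
    ((integrableOn_Ioc_inv_add hρτ (c := τ)).const_mul (4 * K * m τ))
    ((integrableOn_Ioi_div_rpow hτ.1 hs).const_mul (2 * K * m τ / τ))
    (fun a ha => mul_nonneg (by positivity) (inv_nonneg.2 (add_nonneg ha.1.le hρτ.le)))
    (fun a ha => mul_nonneg (div_nonneg (by positivity) hτ.1.le)
      (Real.rpow_nonneg (div_nonneg (hτ.1.trans ha).le hτ.1.le) _))
    (fun a ha haτ => hv.abs_lag_sub_terminal_le_near hm hK hκ' ha.1 haτ
      (by linarith [ha.2]) x)
    (fun a ha hτa => hv.abs_lag_sub_terminal_le_far hm hK hκ' hτ.1 hτa.le (by linarith [ha.2]) x)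
  rw [integral_const_mul, integral_const_mul, setIntegral_Ioc_inv_add hρτ hτ.1.le,
    setIntegral_Ioi_div_rpow hτ.1 hs] at h
  refine h.trans_eq ?_
  have := hτ.1
  have h1κ : 1 - κ ≠ 0 := by linarith [hκ.2]
  rw [show -(κ - 2) - 1 = 1 - κ by ring]
  field_simp

-- Shifting the elapsed time by `τ` aligns the two superpositions source by source.
theorem abs_lagIntegral_sub_terminal_le (hv : WeightedHeatFamily v m ρ K T)
    (hm : IsPotterWeight m ν κ T) (hK : 0 ≤ K) (hν : 0 < ν) (hκ : κ ∈ Ico 0 1) (hτ : τ ∈ Ioo 0 T)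
    (x : V) :
    |lagIntegral v T τ x - lagIntegral v T 0 x| ≤
      K * m τ * (4 * Real.log ((τ + ρ τ ^ 2) / ρ τ ^ 2) + 2 / (1 - κ) + 1 / ν) := by
  have hterminal := hv.intervalIntegrable_terminal hm hK hν (hτ.1.trans hτ.2) x
  have hτT : τ ∈ uIcc 0 T := by rw [uIcc_of_le (hτ.1.trans hτ.2).le]; exact ⟨hτ.1.le, hτ.2.le⟩
  have hleft := hterminal.mono_set (uIcc_subset_uIcc_left hτT)
  have hright := hterminal.mono_set (uIcc_subset_uIcc_right hτT)
  have hshift : IntervalIntegrable (fun a => v (τ + a) (τ + a) x) volume 0 (T - τ) := by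
    simpa using hright.comp_add_left τ
  have hsplit : lagIntegral v T 0 x =
      (∫ a in (0 : ℝ)..τ, v a a x) + ∫ a in (0 : ℝ)..T - τ, v (τ + a) (τ + a) x := by
    rw [intervalIntegral.integral_comp_add_left (fun a => v a a x), add_zero, add_sub_cancel,
      intervalIntegral.integral_add_adjacent_intervals hleft hright, lagIntegral]
    simp only [zero_add, sub_zero]
  rw [hsplit, lagIntegral, sub_add_eq_sub_sub_swap, ← intervalIntegral.integral_sub
    (hv.intervalIntegrable_lag hm hK hν.le hτ x) hshift]
  refine (abs_sub _ _).trans ((add_le_add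
    (hv.abs_integral_lag_sub_terminal_le hm hK hκ hτ x)
    (hv.abs_integral_terminal_le hm hK hν ⟨hτ.1, hτ.2.le⟩ x)).trans_eq ?_)
  ring

lemma abs_lag_sub_lag_le (hv : WeightedHeatFamily v m ρ K T) {a : ℝ} (ha : 0 < a)
    (hτ : 0 < τ) (haT : τ + a < T) (x y : V) :
    |v (τ + a) a y - v (τ + a) a x| ≤
      K * ‖y - x‖ * (m (τ + a) * a ^ (-(1 / 2) : ℝ) / (a + ρ (τ + a) ^ 2)) := by
  refine ((hv.heatEstimates (τ + a) ⟨by linarith, haT⟩).abs_sub_le_space ha x y).trans_eq ?_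
  rw [Real.rpow_neg ha.le, Real.sqrt_eq_rpow]
  ring

lemma abs_lag_sub_lag_le_near (hv : WeightedHeatFamily v m ρ K T) (hm : IsPotterWeight m ν κ T)
    (hK : 0 ≤ K) (hκ : κ ∈ Icc 0 1) {a : ℝ} (ha : 0 < a) (haρ : a ≤ ρ τ ^ 2)
    (hρτ : ρ τ ^ 2 ≤ τ) (haT : τ + a < T) (x y : V) :
    |v (τ + a) a y - v (τ + a) a x| ≤
      2 * K * m τ * ‖y - x‖ / ρ τ ^ 3 * (a / ρ τ ^ 2) ^ (-(1 / 2) : ℝ) := by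
  have hτ : τ ∈ Ioc 0 T := ⟨ha.trans_le (haρ.trans hρτ), by linarith⟩
  have hσ : τ + a ∈ Ioc 0 T := ⟨by linarith [hτ.1], haT.le⟩
  have hρ := hv.radius_pos τ hτ
  have hmτ := hm.pos hτ.1 hτ.2
  have hroot : a ^ (-(1 / 2) : ℝ) = (ρ τ)⁻¹ * (a / ρ τ ^ 2) ^ (-(1 / 2) : ℝ) := by
    rw [Real.div_rpow ha.le (sq_nonneg _), Real.rpow_neg (sq_nonneg (ρ τ)), ← Real.sqrt_eq_rpow,
      Real.sqrt_sq hρ.le]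
    field_simp
  calc |v (τ + a) a y - v (τ + a) a x|
      ≤ K * ‖y - x‖ * (m (τ + a) * a ^ (-(1 / 2) : ℝ) / (a + ρ (τ + a) ^ 2)) :=
        hv.abs_lag_sub_lag_le ha hτ.1 haT x y
    _ ≤ K * ‖y - x‖ * (2 * m τ * a ^ (-(1 / 2) : ℝ) / ρ τ ^ 2) := by
        gcongr
        · exact hm.le_two_mul hκ ha (haρ.trans hρτ) haT.le
        · exact (pow_le_pow_left₀ hρ.le (hv.radius_mono hτ hσ (by linarith)) 2).trans
            (le_add_of_nonneg_left ha.le)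
    _ = 2 * K * m τ * ‖y - x‖ / ρ τ ^ 3 * (a / ρ τ ^ 2) ^ (-(1 / 2) : ℝ) := by
        rw [hroot]
        field_simp

lemma abs_lag_sub_lag_le_far (hv : WeightedHeatFamily v m ρ K T) (hm : IsPotterWeight m ν κ T)
    (hK : 0 ≤ K) (hκ : κ ∈ Icc 0 1) (hτ : 0 < τ) {a : ℝ} (hρa : ρ τ ^ 2 ≤ a)
    (hρτ : ρ τ ^ 2 ≤ τ) (haT : τ + a < T) (x y : V) :
    |v (τ + a) a y - v (τ + a) a x| ≤
      2 * K * m τ * ‖y - x‖ / ρ τ ^ 3 * (a / ρ τ ^ 2) ^ (κ - 3 / 2) := by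
  have hρ := hv.radius_pos τ ⟨hτ, by linarith [sq_nonneg (ρ τ)]⟩
  have ha : 0 < a := (pow_pos hρ 2).trans_le hρa
  have hmσ := hm.pos (by linarith : 0 < τ + a) haT.le
  have hpow : (a / ρ τ ^ 2) ^ (κ - 3 / 2) =
      ρ τ ^ 3 * (a / ρ τ ^ 2) ^ κ * a ^ (-(1 / 2) : ℝ) / a := by
    rw [show κ - 3 / 2 = κ - 1 + -(1 / 2) by ring, Real.rpow_add (by positivity),
      Real.rpow_sub_one (by positivity), Real.div_rpow ha.le (sq_nonneg _) (-(1 / 2)),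
      Real.rpow_neg (sq_nonneg (ρ τ)), ← Real.sqrt_eq_rpow, Real.sqrt_sq hρ.le]
    field_simp
  calc |v (τ + a) a y - v (τ + a) a x|
      ≤ K * ‖y - x‖ * (m (τ + a) * a ^ (-(1 / 2) : ℝ) / (a + ρ (τ + a) ^ 2)) :=
        hv.abs_lag_sub_lag_le ha hτ haT x y
    _ ≤ K * ‖y - x‖ * (2 * m τ * (a / ρ τ ^ 2) ^ κ * a ^ (-(1 / 2) : ℝ) / a) := by
        have hle := hm.le_two_mul_rpow hκ (by positivity) hρa hρτ haT.le
        have hnonneg := hmσ.le.trans hle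
        gcongr
        exact le_add_of_nonneg_right (sq_nonneg _)
    _ = 2 * K * m τ * ‖y - x‖ / ρ τ ^ 3 * (a / ρ τ ^ 2) ^ (κ - 3 / 2) := by
        rw [hpow]
        field_simp

theorem abs_lagIntegral_sub_le (hv : WeightedHeatFamily v m ρ K T) (hm : IsPotterWeight m ν κ T)
    (hK : 0 ≤ K) (hν : 0 ≤ ν) (hκ : κ ∈ Ico 0 (1 / 2)) (hτ : τ ∈ Ioo 0 T) (hρτ : ρ τ ^ 2 ≤ τ)
    (x y : V) :
    |lagIntegral v T τ y - lagIntegral v T τ x| ≤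
      K * m τ / ρ τ * (4 + 2 / (1 / 2 - κ)) * ‖y - x‖ := by
  have hρ := hv.radius_pos τ ⟨hτ.1, hτ.2.le⟩
  have hmτ := hm.pos hτ.1 hτ.2.le
  have hκ' : κ ∈ Icc 0 1 := ⟨hκ.1, by linarith [hκ.2]⟩
  have he : 0 < ρ τ ^ 2 := by positivity
  have hs₁ : (-1 : ℝ) < -(1 / 2) := by norm_num
  have hs₂ : κ - 3 / 2 < -1 := by linarith [hκ.2]
  have hA : 0 ≤ 2 * K * m τ * ‖y - x‖ / ρ τ ^ 3 := by positivity
  rw [lagIntegral, lagIntegral, ← intervalIntegral.integral_sub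
    (hv.intervalIntegrable_lag hm hK hν hτ y) (hv.intervalIntegrable_lag hm hK hν hτ x)]
  have h := abs_intervalIntegral_le_setIntegral_add (sub_nonneg.2 hτ.2.le)
    ((integrableOn_Ioc_div_rpow he hs₁).const_mul (2 * K * m τ * ‖y - x‖ / ρ τ ^ 3))
    ((integrableOn_Ioi_div_rpow he hs₂).const_mul (2 * K * m τ * ‖y - x‖ / ρ τ ^ 3))
    (fun a ha => mul_nonneg hA (Real.rpow_nonneg (div_nonneg ha.1.le he.le) _))
    (fun a ha => mul_nonneg hA (Real.rpow_nonneg (div_nonneg (he.trans ha).le he.le) _))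
    (fun a ha haρ => hv.abs_lag_sub_lag_le_near hm hK hκ' ha.1 haρ hρτ (by linarith [ha.2]) x y)
    (fun a ha hρa => hv.abs_lag_sub_lag_le_far hm hK hκ' hτ.1 hρa.le hρτ (by linarith [ha.2]) x y)
  rw [integral_const_mul, integral_const_mul, setIntegral_Ioc_div_rpow he hs₁,
    setIntegral_Ioi_div_rpow he hs₂] at h
  refine h.trans_eq ?_
  have hκ0 : 1 / 2 - κ ≠ 0 := by linarith [hκ.2]
  rw [show -(κ - 3 / 2) - 1 = 1 / 2 - κ by ring]
  generalize 1 / 2 - κ = d at hκ0 ⊢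
  field_simp
  ring

end WeightedHeatFamily

/-! ### The logarithmically corrected scale -/

section AbsLog

variable {σ τ δ ν s : ℝ}

lemma le_abs_log_of_le_exp_neg {L : ℝ} (hσ : 0 < σ) (hL : σ ≤ exp (-L)) : L ≤ |Real.log σ| :=
  (le_neg.1 ((Real.log_le_iff_le_exp hσ).2 hL)).trans (neg_le_abs _)

lemma abs_log_antitoneOn : AntitoneOn (fun σ => |Real.log σ|) (Ioc 0 1) := fun σ hσ τ hτ hστ => by
  simpa only [abs_of_nonpos (Real.log_nonpos hσ.1.le hσ.2),
    abs_of_nonpos (Real.log_nonpos hτ.1.le hτ.2), neg_le_neg_iff] using Real.log_le_log hσ.1 hστ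

lemma exp_neg_one_div_le_one (hδ : 0 < δ) : exp (-(1 / δ)) ≤ 1 := by
  rw [Real.exp_le_one_iff, neg_nonpos]
  positivity

-- Writing `y = log (σ / τ)`, this is `|log σ| + y ≤ |log σ| * (1 + δ * y)` and `1 + u ≤ exp u`.
lemma abs_log_le_mul_rpow (hτ : 0 < τ) (hτσ : τ ≤ σ) (hδ : 0 < δ) (hσ : σ ≤ exp (-(1 / δ))) :
    |Real.log τ| ≤ |Real.log σ| * (σ / τ) ^ δ := by
  have hσ0 : 0 < σ := hτ.trans_le hτσ
  have hσ1 : σ ≤ 1 := hσ.trans (exp_neg_one_div_le_one hδ)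
  have hratio : 0 ≤ Real.log (σ / τ) := Real.log_nonneg ((one_le_div hτ).2 hτσ)
  have hlog : 1 ≤ |Real.log σ| * δ := (div_le_iff₀ hδ).1 (le_abs_log_of_le_exp_neg hσ0 hσ)
  calc |Real.log τ| = |Real.log σ| + 1 * Real.log (σ / τ) := by
        rw [abs_of_nonpos (Real.log_nonpos hτ.le (hτσ.trans hσ1)),
          abs_of_nonpos (Real.log_nonpos hσ0.le hσ1), Real.log_div hσ0.ne' hτ.ne']
        ring
    _ ≤ |Real.log σ| + |Real.log σ| * δ * Real.log (σ / τ) := by gcongr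
    _ = |Real.log σ| * (Real.log (σ / τ) * δ + 1) := by ring
    _ ≤ |Real.log σ| * (σ / τ) ^ δ := by
        rw [Real.rpow_def_of_pos (by positivity)]
        gcongr
        exact Real.add_one_le_exp _

lemma rpow_mul_abs_log_rpow_le (hτ : 0 < τ) (hτσ : τ ≤ σ) (hν : 0 < ν) (hσ : σ ≤ exp (-(1 / ν)))
    (hs : s ∈ Icc 0 1) :
    τ ^ ν * |Real.log τ| ^ s ≤ σ ^ ν * |Real.log σ| ^ s := by
  have hσ0 : 0 < σ := hτ.trans_le hτσ
  have hratio : 1 ≤ σ / τ := (one_le_div hτ).2 hτσ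
  calc τ ^ ν * |Real.log τ| ^ s ≤ τ ^ ν * (|Real.log σ| * (σ / τ) ^ ν) ^ s := by
        gcongr
        · exact hs.1
        · exact abs_log_le_mul_rpow hτ hτσ hν hσ
    _ = τ ^ ν * (|Real.log σ| ^ s * ((σ / τ) ^ ν) ^ s) := by
        rw [Real.mul_rpow (abs_nonneg _) (by positivity)]
    _ ≤ τ ^ ν * (|Real.log σ| ^ s * (σ / τ) ^ ν) := by
        gcongr
        exact Real.rpow_le_self_of_one_le (Real.one_le_rpow hratio hν.le) hs.2
    _ = σ ^ ν * |Real.log σ| ^ s := by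
        rw [Real.div_rpow hσ0.le hτ.le]
        field_simp

end AbsLog

/-- The scale `μ₀` as a function of the remaining time `σ = T - t`. -/
def logScale (T σ : ℝ) : ℝ := |Real.log (2 * T)| * σ / Real.log σ ^ 2

/-- The cutoff radius `μ₀ * R = μ₀ ^ (1 - β)` as a function of the remaining time. -/
def cutoffRadius (β T σ : ℝ) : ℝ := logScale T σ ^ (1 - β)

section LogScale

variable {T σ τ ν ε β : ℝ}

lemma abs_log_two_mul_le (hT : T ∈ Ioc 0 (1 / 2)) : |Real.log (2 * T)| ≤ |Real.log T| :=
  abs_log_antitoneOn ⟨hT.1, by linarith [hT.2]⟩ ⟨by linarith [hT.1], by linarith [hT.2]⟩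
    (by linarith [hT.1])

lemma one_le_abs_log_two_mul (hT : T ∈ Ioc 0 (exp (-2))) : 1 ≤ |Real.log (2 * T)| := by
  refine le_abs_log_of_le_exp_neg (by linarith [hT.1]) ?_
  have hexp : exp (-1) = exp 1 * exp (-2) := by rw [← Real.exp_add]; norm_num
  rw [hexp]
  exact mul_le_mul (by linarith [Real.add_one_le_exp 1]) hT.2 hT.1.le (Real.exp_pos 1).le

lemma logScale_eq (T σ : ℝ) : logScale T σ = |Real.log (2 * T)| * σ / |Real.log σ| ^ 2 := by
  rw [logScale, sq_abs]

lemma logScale_pos (hT : T ∈ Ioo 0 (1 / 2)) (hσ : σ ∈ Ioo 0 1) : 0 < logScale T σ := by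
  have hlogT := Real.log_neg (x := 2 * T) (by linarith [hT.1]) (by linarith [hT.2])
  exact div_pos (mul_pos (abs_pos.2 hlogT.ne) hσ.1) (sq_pos_of_neg (Real.log_neg hσ.1 hσ.2))

lemma logScale_nonneg (T : ℝ) (hσ : 0 ≤ σ) : 0 ≤ logScale T σ := by
  rw [logScale]
  positivity

lemma logScale_le_mul (T : ℝ) (hσ : 0 < σ) (hστ : σ ≤ τ) (hτ : τ < 1) :
    logScale T σ ≤ logScale T τ * (σ / τ) := by
  have hτ0 : 0 < τ := hσ.trans_le hστ
  have hlog : 0 < |Real.log τ| := abs_pos.2 (Real.log_neg hτ0 hτ).ne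
  calc logScale T σ = |Real.log (2 * T)| * σ / |Real.log σ| ^ 2 := logScale_eq T σ
    _ ≤ |Real.log (2 * T)| * σ / |Real.log τ| ^ 2 := by
        gcongr _ / ?_ ^ 2
        exact abs_log_antitoneOn ⟨hσ, hστ.trans hτ.le⟩ ⟨hτ0, hτ.le⟩ hστ
    _ = logScale T τ * (σ / τ) := by
        rw [logScale_eq]
        field_simp

lemma logScale_mono (T : ℝ) (hσ : 0 < σ) (hστ : σ ≤ τ) (hτ : τ < 1) :
    logScale T σ ≤ logScale T τ :=
  (logScale_le_mul T hσ hστ hτ).trans <|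
    mul_le_of_le_one_right (logScale_nonneg T (hσ.le.trans hστ))
      ((div_le_one (hσ.trans_le hστ)).2 hστ)

lemma logScale_le_mul_rpow (T : ℝ) (hτ : 0 < τ) (hτσ : τ ≤ σ) (hε : 0 < ε)
    (hσ : σ ≤ exp (-(1 / ε))) :
    logScale T σ ≤ logScale T τ * (σ / τ) ^ (1 + 2 * ε) := by
  have hσ0 : 0 < σ := hτ.trans_le hτσ
  have hlogσ : 0 < |Real.log σ| :=
    (one_div_pos.2 hε).trans_le (le_abs_log_of_le_exp_neg hσ0 hσ)
  have hlogτ : 0 < |Real.log τ| :=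
    (one_div_pos.2 hε).trans_le (le_abs_log_of_le_exp_neg hτ (hτσ.trans hσ))
  have hpow : (σ / τ) ^ (1 + 2 * ε) = σ / τ * ((σ / τ) ^ ε) ^ 2 := by
    rw [Real.rpow_add (by positivity), Real.rpow_one, mul_comm 2 ε, Real.rpow_mul (by positivity),
      Real.rpow_two]
  calc logScale T σ
      = logScale T τ * (σ / τ) * (|Real.log τ| ^ 2 / |Real.log σ| ^ 2) := by
        rw [logScale_eq, logScale_eq]
        field_simp
    _ ≤ logScale T τ * (σ / τ) * ((|Real.log σ| * (σ / τ) ^ ε) ^ 2 / |Real.log σ| ^ 2) := by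
        have := logScale_nonneg T hτ.le
        gcongr
        exact abs_log_le_mul_rpow hτ hτσ hε hσ
    _ = logScale T τ * (σ / τ) ^ (1 + 2 * ε) := by
        rw [hpow]
        field_simp

theorem isPotterWeight_logScale_rpow (hν : 0 ≤ ν) (hε : 0 < ε) (hT : T < 1 / 2)
    (hTε : T ≤ exp (-(1 / ε))) :
    IsPotterWeight (fun σ => logScale T σ ^ ν) ν (ν * (1 + 2 * ε)) T where
  pos {σ} hσ hσT := Real.rpow_pos_of_pos
    (logScale_pos ⟨hσ.trans_le hσT, hT⟩ ⟨hσ, by linarith⟩) ν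
  le_mul_rpow_of_le {σ τ} hσ hστ hτT := by
    have hτ : 0 < τ := hσ.trans_le hστ
    rw [← Real.mul_rpow (logScale_nonneg T hτ.le) (by positivity)]
    exact Real.rpow_le_rpow (logScale_nonneg T hσ.le)
      (logScale_le_mul T hσ hστ (by linarith)) hν
  le_mul_rpow_of_ge {σ τ} hτ hτσ hσT := by
    have hσ : 0 < σ := hτ.trans_le hτσ
    rw [mul_comm ν, Real.rpow_mul (by positivity),
      ← Real.mul_rpow (logScale_nonneg T hτ.le) (by positivity)]
    exact Real.rpow_le_rpow (logScale_nonneg T hσ.le)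
      (logScale_le_mul_rpow T hτ hτσ hε (hσT.trans hTε)) hν

lemma exp_neg_two_lt_half : exp (-2) < 1 / 2 :=
  (Real.exp_lt_exp.2 (by norm_num)).trans Real.exp_neg_one_lt_half

lemma logScale_le_self (hT : T ≤ exp (-2)) (hτ : τ ∈ Ioc 0 T) : logScale T τ ≤ τ := by
  have hT2 : T < 1 / 2 := hT.trans_lt exp_neg_two_lt_half
  have hlogτ : 2 ≤ |Real.log τ| := le_abs_log_of_le_exp_neg hτ.1 (hτ.2.trans hT)
  have hlogT : |Real.log (2 * T)| ≤ |Real.log τ| :=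
    (abs_log_two_mul_le ⟨hτ.1.trans_le hτ.2, hT2.le⟩).trans
      (abs_log_antitoneOn ⟨hτ.1, by linarith [hτ.2]⟩ ⟨hτ.1.trans_le hτ.2, by linarith⟩ hτ.2)
  rw [logScale_eq, div_le_iff₀ (by positivity), mul_comm]
  exact mul_le_mul_of_nonneg_left (hlogT.trans (le_self_pow₀ (by linarith) two_ne_zero)) hτ.1.le

lemma pow_three_le_logScale (hT : T ≤ exp (-2)) (hτ : τ ∈ Ioc 0 T) : τ ^ 3 ≤ logScale T τ := by
  have hτ0 := hτ.1
  have hT2 : T < 1 / 2 := hT.trans_lt exp_neg_two_lt_half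
  have hlogτ : 2 ≤ |Real.log τ| := le_abs_log_of_le_exp_neg hτ0 (hτ.2.trans hT)
  have hlog_le : |Real.log τ| ≤ τ⁻¹ := by
    rw [abs_of_nonpos (Real.log_nonpos hτ0.le (by linarith [hτ.2])), ← Real.log_inv]
    linarith [Real.log_le_sub_one_of_pos (inv_pos.2 hτ0)]
  rw [logScale_eq, le_div_iff₀ (by positivity)]
  calc τ ^ 3 * |Real.log τ| ^ 2 ≤ τ ^ 3 * τ⁻¹ ^ 2 := by gcongr
    _ = τ := by field_simp
    _ ≤ |Real.log (2 * T)| * τ :=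
        le_mul_of_one_le_left hτ0.le (one_le_abs_log_two_mul ⟨hτ0.trans_le hτ.2, hT⟩)

lemma logScale_rpow_mul_abs_log_le (hT : T ∈ Ioc 0 (1 / 2)) (hν : 0 ≤ ν) (hτ : τ ∈ Ioo 0 1) :
    logScale T τ ^ ν * |Real.log τ| ≤
      τ ^ ν * |Real.log T| ^ ν * |Real.log τ| ^ (1 - 2 * ν) := by
  have hτ0 := hτ.1
  have hlogτ : 0 < |Real.log τ| := abs_pos.2 (Real.log_neg hτ.1 hτ.2).ne
  calc logScale T τ ^ ν * |Real.log τ|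
      = τ ^ ν * |Real.log (2 * T)| ^ ν * |Real.log τ| ^ (1 - 2 * ν) := by
        rw [logScale_eq, Real.div_rpow (by positivity) (by positivity),
          Real.mul_rpow (by positivity) hτ0.le, Real.rpow_sub hlogτ, Real.rpow_one,
          Real.rpow_mul hlogτ.le, Real.rpow_two]
        ring
    _ ≤ τ ^ ν * |Real.log T| ^ ν * |Real.log τ| ^ (1 - 2 * ν) := by
        gcongr _ * ?_ ^ ν * _
        exact abs_log_two_mul_le hT

lemma cutoffRadius_pos (β : ℝ) (hT : T < 1 / 2) (hσ : σ ∈ Ioc 0 T) : 0 < cutoffRadius β T σ :=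
  Real.rpow_pos_of_pos (logScale_pos ⟨hσ.1.trans_le hσ.2, hT⟩ ⟨hσ.1, by linarith [hσ.2]⟩) _

lemma cutoffRadius_monotoneOn (hβ : β ≤ 1) (hT : T < 1) :
    MonotoneOn (cutoffRadius β T) (Ioc 0 T) := fun _ hσ _ hτ hστ =>
  Real.rpow_le_rpow (logScale_nonneg T hσ.1.le)
    (logScale_mono T hσ.1 hστ (hτ.2.trans_lt hT)) (by linarith)

lemma cutoffRadius_sq (β T : ℝ) (hσ : 0 ≤ σ) :
    cutoffRadius β T σ ^ 2 = logScale T σ ^ (2 * (1 - β)) := by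
  rw [cutoffRadius, mul_comm, Real.rpow_mul (logScale_nonneg T hσ), Real.rpow_two]

lemma cutoffRadius_sq_le (hβ : β ≤ 1 / 2) (hT : T ≤ exp (-2)) (hτ : τ ∈ Ioc 0 T) :
    cutoffRadius β T τ ^ 2 ≤ τ := by
  have hT2 : T < 1 / 2 := hT.trans_lt exp_neg_two_lt_half
  have hle : logScale T τ ≤ τ := logScale_le_self hT hτ
  rw [cutoffRadius_sq β T hτ.1.le]
  exact (Real.rpow_le_self_of_le_one (logScale_nonneg T hτ.1.le) (by linarith [hτ.2])
    (by linarith)).trans hle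

lemma log_add_cutoffRadius_sq_div_le (hβ : β ≤ 1 / 2) (hT : T ≤ exp (-2)) (hτ : τ ∈ Ioc 0 T) :
    Real.log ((τ + cutoffRadius β T τ ^ 2) / cutoffRadius β T τ ^ 2) ≤
      6 * (1 - β) * |Real.log τ| := by
  have hτ0 := hτ.1
  have hT2 : T < 1 / 2 := hT.trans_lt exp_neg_two_lt_half
  have hρ := cutoffRadius_pos β hT2 hτ
  have hlogτ : 2 ≤ |Real.log τ| := le_abs_log_of_le_exp_neg hτ0 (hτ.2.trans hT)
  have habs : |Real.log τ| = -Real.log τ :=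
    abs_of_nonpos (Real.log_nonpos hτ0.le (by linarith [hτ.2]))
  have hlower : τ ^ (6 * (1 - β)) ≤ cutoffRadius β T τ ^ 2 := by
    rw [cutoffRadius_sq β T hτ0.le, show 6 * (1 - β) = (3 : ℕ) * (2 * (1 - β)) by push_cast; ring,
      Real.rpow_mul hτ0.le, Real.rpow_natCast]
    exact Real.rpow_le_rpow (by positivity) (pow_three_le_logScale hT hτ) (by linarith)
  calc Real.log ((τ + cutoffRadius β T τ ^ 2) / cutoffRadius β T τ ^ 2)
      ≤ Real.log (2 * τ / τ ^ (6 * (1 - β))) := by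
        refine Real.log_le_log (by positivity) ?_
        gcongr
        linarith [cutoffRadius_sq_le hβ hT hτ]
    _ = Real.log 2 + Real.log τ - 6 * (1 - β) * Real.log τ := by
        rw [Real.log_div (by positivity) (by positivity), Real.log_mul two_ne_zero hτ0.ne',
          Real.log_rpow hτ0]
    _ ≤ 6 * (1 - β) * |Real.log τ| := by
        rw [habs] at hlogτ ⊢
        linarith [Real.log_two_lt_d9]

end LogScale

/-! ### The three estimates -/

section LogScaleFamily

variable {V : Type*} [NormedAddCommGroup V] {v : ℝ → ℝ → V → ℝ} {ν κ β K T τ : ℝ}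

lemma rpow_mul_abs_log_le_terminal (hν : ν ∈ Ioo 0 (1 / 2)) (hT : T ≤ exp (-(1 / ν)))
    (hτ : τ ∈ Ioc 0 T) :
    τ ^ ν * |Real.log T| ^ ν * |Real.log τ| ^ (1 - 2 * ν) ≤ T ^ ν * |Real.log T| ^ (1 - ν) := by
  have hT0 : 0 < T := hτ.1.trans_le hτ.2
  have hlogT : 0 < |Real.log T| :=
    (one_div_pos.2 hν.1).trans_le (le_abs_log_of_le_exp_neg hT0 hT)
  calc τ ^ ν * |Real.log T| ^ ν * |Real.log τ| ^ (1 - 2 * ν)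
      = |Real.log T| ^ ν * (τ ^ ν * |Real.log τ| ^ (1 - 2 * ν)) := by ring
    _ ≤ |Real.log T| ^ ν * (T ^ ν * |Real.log T| ^ (1 - 2 * ν)) := by
        gcongr _ * ?_
        exact rpow_mul_abs_log_rpow_le hτ.1 hτ.2 hν.1 hT
          ⟨by linarith [hν.2], by linarith [hν.1]⟩
    _ = T ^ ν * |Real.log T| ^ (1 - ν) := by
        rw [mul_left_comm, ← Real.rpow_add hlogT]
        ring_nf

lemma abs_lagIntegral_sub_terminal_le_of_logScale
    (hv : WeightedHeatFamily v (fun σ => logScale T σ ^ ν) (cutoffRadius β T) K T)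
    (hm : IsPotterWeight (fun σ => logScale T σ ^ ν) ν κ T) (hν : 0 < ν) (hκ : κ ∈ Ico 0 1)
    (hβ : β ≤ 1 / 2) (hT : T ≤ exp (-2)) (hK : 0 ≤ K) (hτ : τ ∈ Ioo 0 T) (x : V) :
    |lagIntegral v T τ x - lagIntegral v T 0 x| ≤
      (24 * (1 - β) + 2 / (1 - κ) + 1 / ν) * K *
        (τ ^ ν * |Real.log T| ^ ν * |Real.log τ| ^ (1 - 2 * ν)) := by
  have hτ' : τ ∈ Ioc 0 T := ⟨hτ.1, hτ.2.le⟩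
  have hT2 : T < 1 / 2 := hT.trans_lt exp_neg_two_lt_half
  have hlogτ : 1 ≤ |Real.log τ| :=
    one_le_two.trans (le_abs_log_of_le_exp_neg hτ.1 (hτ.2.le.trans hT))
  have hκ1 : 0 < 1 - κ := by linarith [hκ.2]
  have hβ1 : 0 < 1 - β := by linarith
  have hmτ := hm.pos hτ.1 hτ.2.le
  have hbracket : 4 * Real.log ((τ + cutoffRadius β T τ ^ 2) / cutoffRadius β T τ ^ 2) +
      2 / (1 - κ) + 1 / ν ≤ (24 * (1 - β) + 2 / (1 - κ) + 1 / ν) * |Real.log τ| := by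
    have hκ_le := le_mul_of_one_le_right (a := 2 / (1 - κ)) (by positivity) hlogτ
    have hν_le := le_mul_of_one_le_right (a := 1 / ν) (by positivity) hlogτ
    linarith [log_add_cutoffRadius_sq_div_le hβ hT hτ']
  calc |lagIntegral v T τ x - lagIntegral v T 0 x|
      ≤ K * logScale T τ ^ ν *
          (4 * Real.log ((τ + cutoffRadius β T τ ^ 2) / cutoffRadius β T τ ^ 2) +
            2 / (1 - κ) + 1 / ν) := hv.abs_lagIntegral_sub_terminal_le hm hK hν hκ hτ x
    _ ≤ K * logScale T τ ^ ν *
          ((24 * (1 - β) + 2 / (1 - κ) + 1 / ν) * |Real.log τ|) := by gcongr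
    _ = (24 * (1 - β) + 2 / (1 - κ) + 1 / ν) * K * (logScale T τ ^ ν * |Real.log τ|) := by ring
    _ ≤ _ := by
        gcongr _ * ?_
        exact logScale_rpow_mul_abs_log_le ⟨hτ.1.trans hτ.2, hT2.le⟩ hν.le
          ⟨hτ.1, by linarith [hτ.2]⟩

lemma abs_lagIntegral_zero_le_of_logScale
    (hv : WeightedHeatFamily v (fun σ => logScale T σ ^ ν) (cutoffRadius β T) K T)
    (hm : IsPotterWeight (fun σ => logScale T σ ^ ν) ν κ T) (hν : 0 < ν) (hT : T ∈ Ioc 0 (exp (-2)))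
    (hK : 0 ≤ K) (x : V) :
    |lagIntegral v T 0 x| ≤ 1 / ν * K * (T ^ ν * |Real.log T| ^ (1 - ν)) := by
  have hT2 : T < 1 / 2 := hT.2.trans_lt exp_neg_two_lt_half
  have hlogT : 2 ≤ |Real.log T| := le_abs_log_of_le_exp_neg hT.1 hT.2
  have hmT := hm.pos hT.1 le_rfl
  have hterminal : lagIntegral v T 0 x = ∫ a in (0 : ℝ)..T, v a a x := by
    simp only [lagIntegral, zero_add, sub_zero]
  calc |lagIntegral v T 0 x| ≤ K * logScale T T ^ ν / ν := by
        rw [hterminal]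
        exact hv.abs_integral_terminal_le hm hK hν ⟨hT.1, le_rfl⟩ x
    _ = 1 / ν * K * logScale T T ^ ν := by ring
    _ ≤ 1 / ν * K * (logScale T T ^ ν * |Real.log T|) := by
        gcongr
        exact le_mul_of_one_le_right hmT.le (by linarith)
    _ ≤ 1 / ν * K * (T ^ ν * |Real.log T| ^ ν * |Real.log T| ^ (1 - 2 * ν)) := by
        gcongr _ * ?_
        exact logScale_rpow_mul_abs_log_le ⟨hT.1, hT2.le⟩ hν.le ⟨hT.1, by linarith⟩
    _ = 1 / ν * K * (T ^ ν * |Real.log T| ^ (1 - ν)) := by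
        rw [mul_assoc (T ^ ν), ← Real.rpow_add (by linarith)]
        ring_nf

lemma rpow_div_cutoffRadius (hT : T < 1 / 2) (hτ : τ ∈ Ioo 0 T) :
    logScale T τ ^ ν / cutoffRadius β T τ = logScale T τ ^ (ν - 1) / logScale T τ ^ (-β) := by
  have hpos := logScale_pos ⟨hτ.1.trans hτ.2, hT⟩ ⟨hτ.1, by linarith [hτ.2]⟩
  rw [cutoffRadius, ← Real.rpow_sub hpos, ← Real.rpow_sub hpos]
  ring_nf

lemma exp_neg_one_div_le_exp_neg_two (hν : ν ∈ Ioo 0 (1 / 2)) : exp (-(1 / ν)) ≤ exp (-2) := by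
  rw [Real.exp_le_exp, neg_le_neg_iff, le_div_iff₀ hν.1]
  linarith [hν.2]

lemma abs_lagIntegral_le_of_logScale
    (hv : WeightedHeatFamily v (fun σ => logScale T σ ^ ν) (cutoffRadius β T) K T)
    (hm : IsPotterWeight (fun σ => logScale T σ ^ ν) ν κ T) (hν : ν ∈ Ioo 0 (1 / 2))
    (hκ : κ ∈ Ico 0 1) (hβ : β ≤ 1 / 2) (hT : T ≤ exp (-(1 / ν))) (hK : 0 ≤ K) (hτ : τ ∈ Ioo 0 T)
    (x : V) :
    |lagIntegral v T τ x| ≤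
      (24 * (1 - β) + 2 / (1 - κ) + 2 / ν) * K * (T ^ ν * |Real.log T| ^ (1 - ν)) := by
  have hT2 := hT.trans (exp_neg_one_div_le_exp_neg_two hν)
  have hν0 : 0 < 1 / ν := one_div_pos.2 hν.1
  have hκ1 : 0 < 2 / (1 - κ) := div_pos two_pos (by linarith [hκ.2])
  calc |lagIntegral v T τ x|
      ≤ |lagIntegral v T τ x - lagIntegral v T 0 x| + |lagIntegral v T 0 x| := by
        simpa only [sub_add_cancel] using
          abs_add_le (lagIntegral v T τ x - lagIntegral v T 0 x) (lagIntegral v T 0 x)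
    _ ≤ (24 * (1 - β) + 2 / (1 - κ) + 1 / ν) * K *
            (τ ^ ν * |Real.log T| ^ ν * |Real.log τ| ^ (1 - 2 * ν)) +
          1 / ν * K * (T ^ ν * |Real.log T| ^ (1 - ν)) :=
        add_le_add (abs_lagIntegral_sub_terminal_le_of_logScale hv hm hν.1 hκ hβ hT2 hK hτ x)
          (abs_lagIntegral_zero_le_of_logScale hv hm hν.1 ⟨hτ.1.trans hτ.2, hT2⟩ hK x)
    _ ≤ (24 * (1 - β) + 2 / (1 - κ) + 1 / ν) * K * (T ^ ν * |Real.log T| ^ (1 - ν)) +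
          1 / ν * K * (T ^ ν * |Real.log T| ^ (1 - ν)) := by
        gcongr _ * ?_ + _
        · exact mul_nonneg (by linarith) hK
        · exact rpow_mul_abs_log_le_terminal hν hT ⟨hτ.1, hτ.2.le⟩
    _ = (24 * (1 - β) + 2 / (1 - κ) + 2 / ν) * K * (T ^ ν * |Real.log T| ^ (1 - ν)) := by ring

-- `ε = (1 / 2 - ν) / 2` makes the upper Potter exponent `ν * (1 + 2 * ε)` smaller than `1 / 2`.
lemma exists_isPotterWeight_logScale_rpow (hν : ν ∈ Ioo 0 (1 / 2)) :
    ∃ κ ∈ Ico (0 : ℝ) (1 / 2), ∃ T₀ ∈ Ioc 0 (exp (-(1 / ν))), ∀ T ≤ T₀,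
      IsPotterWeight (fun σ => logScale T σ ^ ν) ν κ T := by
  obtain ⟨hν0, hν2⟩ := hν
  have hε : 0 < (1 / 2 - ν) / 2 := by linarith
  have hT₀ : min (exp (-(1 / ν))) (exp (-(1 / ((1 / 2 - ν) / 2)))) ≤ exp (-(1 / ν)) :=
    min_le_left _ _
  refine ⟨ν * (1 + 2 * ((1 / 2 - ν) / 2)), ⟨by positivity, by nlinarith⟩, _,
    ⟨lt_min (Real.exp_pos _) (Real.exp_pos _), hT₀⟩, fun T hT => ?_⟩
  refine isPotterWeight_logScale_rpow hν0.le hε ?_ (hT.trans (min_le_right _ _))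
  exact ((hT.trans hT₀).trans (exp_neg_one_div_le_exp_neg_two ⟨hν0, hν2⟩)).trans_lt
    exp_neg_two_lt_half

theorem exists_lagIntegral_bounds_of_logScale (hν : ν ∈ Ioo 0 (1 / 2)) (hβ : β ≤ 1 / 2) :
    ∃ A > 0, ∃ T₀ ∈ Ioo (0 : ℝ) (1 / 2), ∀ T ∈ Ioo 0 T₀, ∀ {v : ℝ → ℝ → V → ℝ} {K : ℝ}, 0 ≤ K →
      WeightedHeatFamily v (fun σ => logScale T σ ^ ν) (cutoffRadius β T) K T →
      ∀ τ ∈ Ioo 0 T, ∀ x,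
        |lagIntegral v T τ x| ≤ A * K * (T ^ ν * |Real.log T| ^ (1 - ν)) ∧
        |lagIntegral v T τ x - lagIntegral v T 0 x| ≤
          A * K * (τ ^ ν * |Real.log T| ^ ν * |Real.log τ| ^ (1 - 2 * ν)) ∧
        ∀ y, |lagIntegral v T τ y - lagIntegral v T τ x| ≤
          A * K * (logScale T τ ^ ν / cutoffRadius β T τ) * ‖y - x‖ := by
  obtain ⟨κ, hκ, T₀, hT₀, hm⟩ := exists_isPotterWeight_logScale_rpow hν
  have hT₀_le := hT₀.2.trans (exp_neg_one_div_le_exp_neg_two hν)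
  have hν0 : 0 < 1 / ν := one_div_pos.2 hν.1
  have hκ1 : 0 < 2 / (1 - κ) := div_pos two_pos (by linarith [hκ.2])
  have hκ2 : 0 < 2 / (1 / 2 - κ) := div_pos two_pos (by linarith [hκ.2])
  refine ⟨24 * (1 - β) + 2 / (1 - κ) + 2 / ν + (4 + 2 / (1 / 2 - κ)), ?_, T₀,
    ⟨hT₀.1, hT₀_le.trans_lt exp_neg_two_lt_half⟩, fun T hT v K hK hv τ hτ x => ?_⟩
  · linarith [two_mul (1 / ν), mul_one_div 2 ν]
  have hT2 : T ≤ exp (-2) := hT.2.le.trans hT₀_le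
  have hτ' : τ ∈ Ioc 0 T := ⟨hτ.1, hτ.2.le⟩
  have hκ' : κ ∈ Ico 0 1 := ⟨hκ.1, by linarith [hκ.2]⟩
  have hm := hm T hT.2.le
  have hmτ := hm.pos hτ.1 hτ.2.le
  have hρτ := hv.radius_pos τ hτ'
  have hT0 := hT.1
  have hτ0 := hτ.1
  refine ⟨(abs_lagIntegral_le_of_logScale hv hm hν hκ' hβ (hT.2.le.trans hT₀.2) hK hτ x).trans ?_,
    (abs_lagIntegral_sub_terminal_le_of_logScale hv hm hν.1 hκ' hβ hT2 hK hτ x).trans ?_,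
    fun y => (hv.abs_lagIntegral_sub_le hm hK hν.1.le hκ hτ
      (cutoffRadius_sq_le hβ hT2 hτ') x y).trans ?_⟩
  · gcongr ?_ * _ * _
    linarith
  · gcongr ?_ * _ * _
    linarith [mul_one_div 2 ν]
  · calc K * logScale T τ ^ ν / cutoffRadius β T τ * (4 + 2 / (1 / 2 - κ)) * ‖y - x‖
        = (4 + 2 / (1 / 2 - κ)) * K * (logScale T τ ^ ν / cutoffRadius β T τ) * ‖y - x‖ := by ring
      _ ≤ _ := by
          gcongr ?_ * _ * _ * _
          linarith [mul_one_div 2 ν]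

end LogScaleFamily

/-- The potentials of the time slices of `g`, indexed by the remaining time `σ = T - s`. -/
def slicePotential (g : E4 → ℝ → ℝ) (T σ a : ℝ) (x : E4) : ℝ :=
  neumannPotential (fun z => g z (T - σ)) a x

lemma duhamel_eq_lagIntegral (g : E4 → ℝ → ℝ) (T τ : ℝ) (x : E4) :
    duhamel g x (T - τ) = lagIntegral (slicePotential g T) T τ x := by
  have h := intervalIntegral.integral_comp_sub_left (a := 0) (b := T - τ)
    (fun s => neumannPotential (fun z => g z s) (T - τ - s) x) (T - τ)
  simp only [sub_sub_cancel, sub_self, sub_zero] at h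
  simp only [duhamel, lagIntegral, slicePotential, sub_add_eq_sub_sub]
  exact h.symm

lemma abs_le_div_max_sq {y N r d : ℝ} (hN : 0 ≤ N) (hle : r ≤ d → |y| ≤ N / d ^ 2)
    (hzero : d < r → y = 0) : |y| ≤ N / max r d ^ 2 := by
  rcases le_or_gt r d with hrd | hdr
  · rw [max_eq_right hrd]
    exact hle hrd
  · rw [hzero hdr, abs_zero]
    positivity

theorem exists_weightedHeatFamily_slicePotential :
    ∃ C > 0, ∀ {ν β T M : ℝ} {ξ : ℝ → E4} {g : E4 → ℝ → ℝ}, β ≤ 1 → T < 1 / 2 → 0 ≤ M →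
      Measurable (Function.uncurry g) →
      (∀ x ∈ halfSpace, ∀ t ∈ Ioo 0 T,
        (μ₀ T t * Rfn β T t ≤ ‖x - ξ t‖ → |g x t| ≤ M * μ₀ T t ^ ν / ‖x - ξ t‖ ^ 2) ∧
        (‖x - ξ t‖ < μ₀ T t * Rfn β T t → g x t = 0)) →
      WeightedHeatFamily (slicePotential g T) (fun σ => logScale T σ ^ ν) (cutoffRadius β T)
        (C * M) T := by
  obtain ⟨C, hC, hest⟩ := exists_heatEstimates_neumannPotential
  refine ⟨C, hC, fun {ν β T M ξ g} hβ hT hM hg hbound => ⟨fun σ hσ => cutoffRadius_pos β hT hσ,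
    cutoffRadius_monotoneOn hβ (by linarith), fun σ hσ => ?_,
    fun x => measurable_neumannPotential hg T x⟩⟩
  have hscale := logScale_pos ⟨hσ.1.trans hσ.2, hT⟩ ⟨hσ.1, by linarith [hσ.2]⟩
  have hradius : cutoffRadius β T σ = logScale T σ * logScale T σ ^ (-β) := by
    rw [cutoffRadius, sub_eq_add_neg, Real.rpow_add hscale, Real.rpow_one]
  have hN : 0 ≤ M * logScale T σ ^ ν := by positivity
  rw [mul_assoc]
  refine hest (ξ := ξ (T - σ)) (hg.comp (by fun_prop : Measurable fun z : E4 => (z, T - σ))) hN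
    (cutoffRadius_pos β hT ⟨hσ.1, hσ.2.le⟩) fun z hz => ?_
  have hslice := hbound z hz (T - σ) ⟨by linarith [hσ.2], by linarith [hσ.1]⟩
  simp only [μ₀, Rfn, sub_sub_cancel] at hslice
  rw [hradius]
  exact abs_le_div_max_sq hN hslice.1 hslice.2

theorem outer_linear_theory_outer_weight_general (ν₂ β : ℝ) (hν₂ : ν₂ ∈ Ioo (0 : ℝ) (1 / 2))
    (hβ : β ≤ 1 / 2) :
    ∃ C > (0 : ℝ), ∃ T₀ ∈ Ioo (0 : ℝ) (1 / 2), ∀ T ∈ Ioo (0 : ℝ) T₀, ∀ ξ : ℝ → E4,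
      ∀ M : ℝ, 0 ≤ M → ∀ g₁ : E4 → ℝ → ℝ, Measurable (Function.uncurry g₁) →
      (∀ x ∈ halfSpace, ∀ t ∈ Ioo (0 : ℝ) T,
        (μ₀ T t * Rfn β T t ≤ ‖x - ξ t‖ →
          |g₁ x t| ≤ M * μ₀ T t ^ ν₂ / ‖x - ξ t‖ ^ 2) ∧
        (‖x - ξ t‖ < μ₀ T t * Rfn β T t → g₁ x t = 0)) →
      ∀ x : E4, ∀ t ∈ Ioo (0 : ℝ) T,
        |duhamel g₁ x t| ≤ C * M * T ^ ν₂ * |Real.log T| ^ (1 - ν₂) ∧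
        |duhamel g₁ x t - duhamel g₁ x T|
          ≤ C * M * (T - t) ^ ν₂ * |Real.log T| ^ ν₂ * |Real.log (T - t)| ^ (1 - 2 * ν₂) ∧
        ∀ y : E4, |duhamel g₁ y t - duhamel g₁ x t| ≤
          C * M * μ₀ T t ^ (ν₂ - 1) / Rfn β T t * ‖y - x‖ := by
  obtain ⟨C, hC, hfamily⟩ := exists_weightedHeatFamily_slicePotential
  obtain ⟨A, hA, T₀, hT₀, hbounds⟩ := exists_lagIntegral_bounds_of_logScale (V := E4) hν₂ hβ
  refine ⟨A * C, by positivity, T₀, hT₀, fun T hT ξ M hM g₁ hg₁ hsource x t ht => ?_⟩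
  have hT_half : T < 1 / 2 := hT.2.trans hT₀.2
  have hτ : T - t ∈ Ioo 0 T := ⟨by linarith [ht.2], by linarith [ht.1]⟩
  have hduhamel : ∀ y, duhamel g₁ y t = lagIntegral (slicePotential g₁ T) T (T - t) y := fun y => by
    rw [← duhamel_eq_lagIntegral, sub_sub_cancel]
  have hduhamel_T : duhamel g₁ x T = lagIntegral (slicePotential g₁ T) T 0 x := by
    rw [← duhamel_eq_lagIntegral, sub_zero]
  obtain ⟨hsize, hdiff, hlip⟩ := hbounds T hT (by positivity)
    (hfamily (by linarith) hT_half hM hg₁ hsource) (T - t) hτ x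
  rw [hduhamel_T]
  simp only [hduhamel]
  refine ⟨hsize.trans_eq (by ring), hdiff.trans_eq (by ring), fun y => (hlip y).trans_eq ?_⟩
  rw [rpow_div_cutoffRadius hT_half hτ, μ₀, Rfn, μ₀, ← logScale]
  ring

/-- Lemma 5.2: if `|g₁(x,t)| ≤ M μ₀(t)^{ν₂}/|x - ξ(t)|²` on `{|x - ξ(t)| ≥ μ₀(t)R(t)}` and
`g₁` vanishes inside this set, then the Duhamel representation `ψ` of `g₁` satisfies
`|ψ| ≲ M T^{ν₂}|log T|^{1-ν₂}`,
`|ψ(x,t) - ψ(x,T)| ≲ M (T-t)^{ν₂}|log T|^{ν₂}|log(T-t)|^{1-2ν₂}` and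
`|∇ψ| ≲ M μ₀(t)^{ν₂-1}/R(t)`. -/
theorem outer_linear_theory_outer_weight (ν₂ β : ℝ) (hν₂ : ν₂ ∈ Ioo (0 : ℝ) (1 / 2))
    (hβ : β ∈ Ioo (0 : ℝ) (1 / 2)) :
    ∃ C > (0 : ℝ), ∃ T₀ ∈ Ioo (0 : ℝ) (1 / 2), ∀ T ∈ Ioo (0 : ℝ) T₀,
      ∀ ξ : ℝ → E4, ContinuousOn ξ (Icc 0 T) → (∀ t ∈ Icc (0 : ℝ) T, 0 ≤ ξ t 3) →
      ∀ M : ℝ, 0 < M → ∀ g₁ : E4 → ℝ → ℝ, Measurable (Function.uncurry g₁) →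
      (∀ x ∈ halfSpace, ∀ t ∈ Ioo (0 : ℝ) T,
        (μ₀ T t * Rfn β T t ≤ ‖x - ξ t‖ →
          |g₁ x t| ≤ M * μ₀ T t ^ ν₂ / ‖x - ξ t‖ ^ 2) ∧
        (‖x - ξ t‖ < μ₀ T t * Rfn β T t → g₁ x t = 0)) →
      ∀ x : E4, 0 ≤ x 3 → ∀ t ∈ Ioo (0 : ℝ) T,
        |duhamel g₁ x t| ≤ C * M * T ^ ν₂ * |Real.log T| ^ (1 - ν₂) ∧
        |duhamel g₁ x t - duhamel g₁ x T|
          ≤ C * M * (T - t) ^ ν₂ * |Real.log T| ^ ν₂ * |Real.log (T - t)| ^ (1 - 2 * ν₂) ∧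
        ‖fderiv ℝ (fun x' => duhamel g₁ x' t) x‖ ≤ C * M * μ₀ T t ^ (ν₂ - 1) / Rfn β T t := by
  obtain ⟨C, hC, T₀, hT₀, h⟩ := outer_linear_theory_outer_weight_general ν₂ β hν₂ hβ.2.le
  refine ⟨C, hC, T₀, hT₀, fun T hT ξ _ _ M hM g₁ hg₁ hsource x _ t ht => ?_⟩
  obtain ⟨hsize, hdiff, hlip⟩ := h T hT ξ M hM.le g₁ hg₁ hsource x t ht
  have hμ₀ : 0 ≤ μ₀ T t := logScale_nonneg T (sub_nonneg.2 ht.2.le)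
  refine ⟨hsize, hdiff, norm_fderiv_le_of_lip' ℝ ?_ (.of_forall hlip)⟩
  rw [Rfn]
  positivity
end
end

section
/- Let T > 0, let μ : [−T, T] → ℝ be continuously differentiable, and fix ξ ∈ ℝ⁴. Define u₁(x, t) := −2 ∫_{−T}^{t} μ'(s) k(|x − ξ|, t − s) ds for x ∈ ℝ⁴ ∖ {ξ} and t ∈ (−T, T). Then u₁ is differentiable in t and twice differentiable in x on (ℝ⁴ ∖ {ξ}) × (−T, T), and it satisfies ∂_t u₁(x, t) − Δ_x u₁(x, t) = −2 μ'(t)/|x − ξ|² for all x ≠ ξ and all t ∈ (−T, T). -/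
noncomputable section
open Real Set

/-- The Laplacian on `ℝ⁴`. -/
def lap (f : E4 → ℝ) (x : E4) : ℝ :=
  ∑ i : Fin 4, fderiv ℝ (fun z => fderiv ℝ f z (EuclideanSpace.single i 1)) x
    (EuclideanSpace.single i 1)

/-- `k(ζ, t) = (1 - exp(-ζ²/(4t)))/ζ²`. -/
def kk (ζ t : ℝ) : ℝ := (1 - Real.exp (-ζ ^ 2 / (4 * t))) / ζ ^ 2

/-- `u₁(x, t) = -2 ∫_{-T}^{t} μ'(s) k(|x - ξ|, t - s) ds`. -/
def u₁ (T : ℝ) (μ' : ℝ → ℝ) (ξ : E4) (x : E4) (t : ℝ) : ℝ :=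
  -2 * ∫ s in (-T)..t, μ' s * kk ‖x - ξ‖ (t - s)

open MeasureTheory Filter
open scoped Topology ContDiff RealInnerProductSpace Nat

/-!
Set `w = ‖x - ξ‖²`. Splitting off the constant `1` in the kernel writes `u₁ = φ(w, t) / w` with
`φ = -2 (∫ μ' - ∫ μ' s exp (-w / (4 (t - s))) ds)`. The function `1 / ‖x - ξ‖²` is harmonic on
`ℝ⁴ ∖ {ξ}`, which makes all lower order terms cancel in `Δ (φ(w) / w) = 4 φ''(w)`; so the heat
equation with source amounts to `∂_t φ - 4 w ∂_w² φ = -2 μ'(t)`, and this holds because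
`exp (-w / (4 τ))` satisfies `∂_τ = 4 w ∂_w²`. The exponential, extended by zero to `τ ≤ 0`, is
smooth in `τ`, so the integral may be extended past `s = t` to a fixed interval and differentiated
under the integral sign, with no singularity or boundary term at `s = t`.
-/

section Calculus

lemma contDiffOn_infty_of_hasDerivAt_succ {𝕜 F : Type*} [NontriviallyNormedField 𝕜]
    [NormedAddCommGroup F] [NormedSpace 𝕜 F] {f : ℕ → 𝕜 → F} {s : Set 𝕜} (hs : IsOpen s)
    (hf : ∀ n, ∀ x ∈ s, HasDerivAt (f n) (f (n + 1) x) x) (n : ℕ) :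
    ContDiffOn 𝕜 ∞ (f n) s := by
  refine contDiffOn_infty.2 fun k => ?_
  induction k generalizing n with
  | zero => exact contDiffOn_zero.2 fun x hx => (hf n x hx).continuousAt.continuousWithinAt
  | succ k ih =>
    push_cast
    rw [contDiffOn_succ_iff_deriv_of_isOpen hs]
    exact ⟨fun x hx => (hf n x hx).differentiableAt.differentiableWithinAt, by simp,
      (ih (n + 1)).congr fun x hx => (hf n x hx).deriv⟩

variable {ν : Measure ℝ} {a b C : ℝ} {m : ℝ → ℝ}

lemma intervalIntegrable_mul_of_abs_le {g : ℝ → ℝ} (hm : IntervalIntegrable m ν a b)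
    (hg : Measurable g) (hgC : ∀ s, |g s| ≤ C) :
    IntervalIntegrable (fun s => m s * g s) ν a b :=
  intervalIntegrable_iff.2 <|
    (intervalIntegrable_iff.1 hm).mul_bdd hg.aestronglyMeasurable (.of_forall hgC)

lemma hasDerivAt_intervalIntegral_mul_of_abs_deriv_le {F F' : ℝ → ℝ → ℝ} {p C' : ℝ} {S : Set ℝ}
    (hm : IntervalIntegrable m ν a b) (hS : S ∈ 𝓝 p) (hF : ∀ q, Measurable (F q))
    (hF' : Measurable (F' p)) (hFC : ∀ s, |F p s| ≤ C) (hF'C : ∀ q ∈ S, ∀ s, |F' q s| ≤ C')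
    (hFF' : ∀ q ∈ S, ∀ s, HasDerivAt (fun q => F q s) (F' q s) q) :
    HasDerivAt (fun q => ∫ s in a..b, m s * F q s ∂ν) (∫ s in a..b, m s * F' p s ∂ν) p := by
  have hm' : AEStronglyMeasurable m (ν.restrict (uIoc a b)) :=
    (intervalIntegrable_iff.1 hm).aestronglyMeasurable
  refine (intervalIntegral.hasDerivAt_integral_of_dominated_loc_of_deriv_le
    (F' := fun q s => m s * F' q s) (bound := fun s => ‖m s‖ * C') hS
    (.of_forall fun q => hm'.mul (hF q).aestronglyMeasurable)
    (intervalIntegrable_mul_of_abs_le hm (hF p) hFC) (hm'.mul hF'.aestronglyMeasurable)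
    (.of_forall fun s _ q hq => ?_) (hm.norm.mul_const C')
    (.of_forall fun s _ q hq => (hFF' q hq s).const_mul (m s))).2
  rw [norm_mul]
  exact mul_le_mul_of_nonneg_left (hF'C q hq s) (norm_nonneg _)

lemma hasDerivAt_integral_right_of_mem_Ioo {F : Type*} [NormedAddCommGroup F] [NormedSpace ℝ F]
    [CompleteSpace F] {f : ℝ → F} {t : ℝ} (hf : IntervalIntegrable f volume a b)
    (ht : t ∈ Ioo a b) (hft : ContinuousAt f t) :
    HasDerivAt (fun t => ∫ s in a..t, f s) (f t) t := by
  have hsub : uIcc a t ⊆ uIcc a b :=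
    uIcc_subset_uIcc left_mem_uIcc (Icc_subset_uIcc (Ioo_subset_Icc_self ht))
  have hmeas : AEStronglyMeasurable f (volume.restrict (Ioc a b)) := hf.1.aestronglyMeasurable
  exact intervalIntegral.integral_hasDerivAt_right (hf.mono_set hsub)
    ⟨Ioc a b, Ioc_mem_nhds ht.1 ht.2, hmeas⟩ hft

lemma hasDerivAt_expNegInvGlue (x : ℝ) :
    HasDerivAt expNegInvGlue (x⁻¹ ^ 2 * expNegInvGlue x) x := by
  simpa using expNegInvGlue.hasDerivAt_polynomial_eval_inv_mul 1 x

end Calculus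

section Radial

variable {E : Type*} [NormedAddCommGroup E] [InnerProductSpace ℝ E] {ξ x : E} {g g' : ℝ → ℝ}
  {d : ℝ}

lemma hasFDerivAt_comp_norm_sub_sq (hg : HasDerivAt g d (‖x - ξ‖ ^ 2)) :
    HasFDerivAt (fun z => g (‖z - ξ‖ ^ 2)) ((2 * d) • innerSL ℝ (x - ξ)) x := by
  have h := hg.comp_hasFDerivAt x ((hasFDerivAt_id x).sub_const ξ).norm_sq
  refine h.congr_fderiv ?_
  rw [ContinuousLinearMap.comp_id, id, ← Nat.cast_smul_eq_nsmul ℝ, smul_smul, mul_comm,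
    Nat.cast_ofNat]

lemma fderiv_fderiv_comp_norm_sub_sq
    (hg : ∀ᶠ w in 𝓝 (‖x - ξ‖ ^ 2), HasDerivAt g (g' w) w)
    (hg' : HasDerivAt g' d (‖x - ξ‖ ^ 2)) (v : E) :
    fderiv ℝ (fun z => fderiv ℝ (fun y => g (‖y - ξ‖ ^ 2)) z v) x v =
      4 * d * ⟪x - ξ, v⟫ ^ 2 + 2 * g' (‖x - ξ‖ ^ 2) * ‖v‖ ^ 2 := by
  have hfirst : (fun z => fderiv ℝ (fun y => g (‖y - ξ‖ ^ 2)) z v) =ᶠ[𝓝 x]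
      fun z => 2 * g' (‖z - ξ‖ ^ 2) * ⟪z - ξ, v⟫ := by
    have hcont : ContinuousAt (fun z => ‖z - ξ‖ ^ 2) x := by fun_prop
    filter_upwards [hcont.eventually hg] with z hz
    rw [(hasFDerivAt_comp_norm_sub_sq hz).fderiv]
    rfl
  have hinner : HasFDerivAt (fun z => ⟪z - ξ, v⟫) (innerSL ℝ v) x := by
    refine (((hasFDerivAt_id x).sub_const ξ).inner ℝ (hasFDerivAt_const v x)).congr_fderiv ?_
    ext y
    simp [real_inner_comm]
  rw [hfirst.fderiv_eq, (((hasFDerivAt_comp_norm_sub_sq hg').const_mul 2).fun_mul hinner).fderiv]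
  simp only [add_apply, smul_apply, innerSL_apply_apply,
    smul_eq_mul, real_inner_self_eq_norm_sq]
  ring

end Radial

section Laplacian

variable {ξ x : E4} {d : ℝ}

lemma lap_congr_of_eventuallyEq {f g : E4 → ℝ} (h : f =ᶠ[𝓝 x] g) : lap f x = lap g x := by
  refine Finset.sum_congr rfl fun i _ => ?_
  have hi : (fun z => fderiv ℝ f z (EuclideanSpace.single i 1)) =ᶠ[𝓝 x]
      fun z => fderiv ℝ g z (EuclideanSpace.single i 1) :=
    h.fderiv.mono fun z hz => DFunLike.congr_fun hz _
  rw [hi.fderiv_eq]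

lemma lap_comp_norm_sub_sq {g g' : ℝ → ℝ}
    (hg : ∀ᶠ w in 𝓝 (‖x - ξ‖ ^ 2), HasDerivAt g (g' w) w)
    (hg' : HasDerivAt g' d (‖x - ξ‖ ^ 2)) :
    lap (fun y => g (‖y - ξ‖ ^ 2)) x = 4 * ‖x - ξ‖ ^ 2 * d + 8 * g' (‖x - ξ‖ ^ 2) := by
  have hsum : ∑ i : Fin 4, ⟪x - ξ, EuclideanSpace.single i 1⟫ ^ 2 = ‖x - ξ‖ ^ 2 := by
    simpa using (EuclideanSpace.basisFun (Fin 4) ℝ).sum_sq_inner_left (x - ξ)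
  simp only [lap, fderiv_fderiv_comp_norm_sub_sq hg hg', Finset.sum_add_distrib,
    ← Finset.mul_sum, hsum, PiLp.norm_single, norm_one, one_pow, Finset.sum_const,
    Finset.card_univ, Fintype.card_fin, nsmul_eq_mul, Nat.cast_ofNat]
  ring

lemma lap_comp_norm_sub_sq_div {g g' : ℝ → ℝ} (hx : x ≠ ξ)
    (hg : ∀ᶠ w in 𝓝 (‖x - ξ‖ ^ 2), HasDerivAt g (g' w) w)
    (hg' : HasDerivAt g' d (‖x - ξ‖ ^ 2)) :
    lap (fun y => g (‖y - ξ‖ ^ 2) / ‖y - ξ‖ ^ 2) x = 4 * d := by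
  have hζ : ‖x - ξ‖ ≠ 0 := norm_sub_eq_zero_iff.not.2 hx
  have hw : ‖x - ξ‖ ^ 2 ≠ 0 := pow_ne_zero 2 hζ
  have hfirst : ∀ᶠ w in 𝓝 (‖x - ξ‖ ^ 2),
      HasDerivAt (fun w => g w / w) ((g' w * w - g w) / w ^ 2) w := by
    filter_upwards [hg, isOpen_ne.mem_nhds hw] with w hgw hw0
    simpa using hgw.fun_div (hasDerivAt_id w) hw0
  have hsecond := ((hg'.fun_mul (hasDerivAt_id _)).fun_sub hg.self_of_nhds).fun_div
    ((hasDerivAt_id _).fun_pow 2) (pow_ne_zero 2 hw)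
  rw [lap_comp_norm_sub_sq hfirst hsecond]
  simp only [id]
  field_simp
  ring

end Laplacian

section GaussKernel

/-- The `n`-th derivative in `w` of `exp (-w / (4 τ))`, extended by zero to `τ ≤ 0`. The extension
is written through `expNegInvGlue` to inherit its smoothness across `τ = 0`; the formula has this
meaning only for `0 < w`. -/
def gaussKernel (n : ℕ) (w τ : ℝ) : ℝ := (-(4 * τ)⁻¹) ^ n * expNegInvGlue (4 * τ / w)

variable {w τ : ℝ}

lemma gaussKernel_of_pos (n : ℕ) (hw : 0 < w) (hτ : 0 < τ) :
    gaussKernel n w τ = (-(4 * τ)⁻¹) ^ n * exp (-w / (4 * τ)) := by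
  have : ¬ 4 * τ / w ≤ 0 := not_le.2 (by positivity)
  rw [gaussKernel, expNegInvGlue, if_neg this, inv_div, neg_div]

lemma gaussKernel_of_nonpos (n : ℕ) (hw : 0 < w) (hτ : τ ≤ 0) : gaussKernel n w τ = 0 := by
  rw [gaussKernel, expNegInvGlue.zero_of_nonpos, mul_zero]
  exact div_nonpos_of_nonpos_of_nonneg (by linarith) hw.le

@[fun_prop]
lemma measurable_gaussKernel (n : ℕ) (w : ℝ) : Measurable (gaussKernel n w) := by
  have : Measurable expNegInvGlue := (expNegInvGlue.contDiff (n := 0)).continuous.measurable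
  unfold gaussKernel
  fun_prop

lemma abs_gaussKernel_le (n : ℕ) (hw : 0 < w) (τ : ℝ) : |gaussKernel n w τ| ≤ n ! / w ^ n := by
  rcases le_or_gt τ 0 with hτ | hτ
  · rw [gaussKernel_of_nonpos n hw hτ, abs_zero]
    positivity
  set y := (4 * τ)⁻¹ with hy
  have hy0 : 0 < y := by positivity
  have hexp : y ^ n * w ^ n ≤ n ! * exp (w * y) := by
    rw [← mul_pow, mul_comm y, ← div_le_iff₀' (by positivity)]
    exact pow_div_factorial_le_exp _ (by positivity) n
  calc |gaussKernel n w τ| = y ^ n / exp (w * y) := by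
        rw [gaussKernel_of_pos n hw hτ, ← hy, abs_mul, abs_pow, abs_neg, abs_of_pos hy0, abs_exp,
          div_eq_mul_inv (-w), ← hy, neg_mul, exp_neg, ← div_eq_mul_inv]
    _ ≤ n ! / w ^ n := (div_le_div_iff₀ (exp_pos _) (by positivity)).2 hexp

lemma hasDerivAt_gaussKernel_left (n : ℕ) (hw : w ≠ 0) (τ : ℝ) :
    HasDerivAt (fun w => gaussKernel n w τ) (gaussKernel (n + 1) w τ) w := by
  have harg : HasDerivAt (fun w => 4 * τ / w) (-(4 * τ) / w ^ 2) w := by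
    simpa using (hasDerivAt_const w (4 * τ)).fun_div (hasDerivAt_id w) hw
  refine (((hasDerivAt_expNegInvGlue _).comp w harg).const_mul _).congr_deriv ?_
  rcases eq_or_ne τ 0 with rfl | hτ
  · simp [gaussKernel]
  · simp only [gaussKernel, pow_succ]
    field_simp

lemma hasDerivAt_gaussKernel_zero_right (hw : w ≠ 0) (τ : ℝ) :
    HasDerivAt (fun τ => gaussKernel 0 w τ) (4 * w * gaussKernel 2 w τ) τ := by
  have harg : HasDerivAt (fun τ => 4 * τ / w) (4 / w) τ := by
    simpa using ((hasDerivAt_id τ).const_mul 4).div_const w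
  have h := (hasDerivAt_expNegInvGlue _).comp τ harg
  simp only [gaussKernel, pow_zero, one_mul]
  refine h.congr_deriv ?_
  rcases eq_or_ne τ 0 with rfl | hτ
  · simp
  · field_simp

lemma kk_eq_gaussKernel {ζ : ℝ} (hζ : ζ ≠ 0) (hτ : 0 < τ) :
    kk ζ τ = (1 - gaussKernel 0 (ζ ^ 2) τ) / ζ ^ 2 := by
  rw [kk, gaussKernel_of_pos 0 (by positivity) hτ, pow_zero, one_mul]

end GaussKernel

section GaussConv

/-- The convolution in time of a density `m` on `[a, b]` with `gaussKernel n w`. Only `s < t`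
contributes, so for `0 < w` and `t ∈ [a, b]` this is the integral over the past `[a, t]`. -/
def gaussConv (m : ℝ → ℝ) (a b : ℝ) (n : ℕ) (w t : ℝ) : ℝ :=
  ∫ s in a..b, m s * gaussKernel n w (t - s)

variable {m : ℝ → ℝ} {a b w t : ℝ}

lemma intervalIntegrable_mul_gaussKernel (hm : IntervalIntegrable m volume a b) (n : ℕ)
    (hw : 0 < w) (t : ℝ) :
    IntervalIntegrable (fun s => m s * gaussKernel n w (t - s)) volume a b :=
  intervalIntegrable_mul_of_abs_le hm (by fun_prop) fun s => abs_gaussKernel_le n hw (t - s)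

lemma gaussConv_eq_integral_past (hm : IntervalIntegrable m volume a b) (n : ℕ) (hw : 0 < w)
    (ht : t ∈ Icc a b) :
    gaussConv m a b n w t = ∫ s in a..t, m s * gaussKernel n w (t - s) := by
  have hi {c d : ℝ} (hc : c ∈ Icc a b) (hd : d ∈ Icc a b) :
      IntervalIntegrable (fun s => m s * gaussKernel n w (t - s)) volume c d :=
    (intervalIntegrable_mul_gaussKernel hm n hw t).mono_set
      (uIcc_subset_uIcc (Icc_subset_uIcc hc) (Icc_subset_uIcc hd))
  have hab := ht.1.trans ht.2
  have hfuture : ∫ s in t..b, m s * gaussKernel n w (t - s) = 0 := by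
    refine intervalIntegral.integral_zero_ae (.of_forall fun s hs => ?_)
    rw [uIoc_of_le ht.2] at hs
    rw [gaussKernel_of_nonpos n hw (sub_nonpos.2 hs.1.le), mul_zero]
  rw [gaussConv, ← intervalIntegral.integral_add_adjacent_intervals
    (hi (left_mem_Icc.2 hab) ht) (hi ht (right_mem_Icc.2 hab)), hfuture, add_zero]

lemma hasDerivAt_gaussConv_left (hm : IntervalIntegrable m volume a b) (n : ℕ) (hw : 0 < w)
    (t : ℝ) :
    HasDerivAt (fun w => gaussConv m a b n w t) (gaussConv m a b (n + 1) w t) w := by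
  refine hasDerivAt_intervalIntegral_mul_of_abs_deriv_le
    (F := fun w s => gaussKernel n w (t - s)) (F' := fun w s => gaussKernel (n + 1) w (t - s))
    (C' := (n + 1)! / (w / 2) ^ (n + 1)) hm (Ioi_mem_nhds (half_lt_self hw))
    (fun _ => by fun_prop) (by fun_prop) (fun s => abs_gaussKernel_le n hw (t - s))
    (fun v hv s => ?_) fun v hv s => hasDerivAt_gaussKernel_left n ((half_pos hw).trans hv).ne' _
  have hwv : w / 2 ≤ v := le_of_lt hv
  calc |gaussKernel (n + 1) v (t - s)| ≤ (n + 1)! / v ^ (n + 1) :=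
        abs_gaussKernel_le (n + 1) ((half_pos hw).trans hv) (t - s)
    _ ≤ (n + 1)! / (w / 2) ^ (n + 1) := by gcongr

lemma contDiffOn_gaussConv_left (hm : IntervalIntegrable m volume a b) (n : ℕ) (t : ℝ) :
    ContDiffOn ℝ ∞ (fun w => gaussConv m a b n w t) (Ioi 0) :=
  contDiffOn_infty_of_hasDerivAt_succ (f := fun n w => gaussConv m a b n w t) isOpen_Ioi
    (fun n _ hw => hasDerivAt_gaussConv_left hm n hw t) n

lemma hasDerivAt_gaussConv_zero_right (hm : IntervalIntegrable m volume a b) (hw : 0 < w)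
    (t : ℝ) :
    HasDerivAt (fun t => gaussConv m a b 0 w t) (4 * w * gaussConv m a b 2 w t) t := by
  have h := hasDerivAt_intervalIntegral_mul_of_abs_deriv_le (p := t)
    (F := fun t s => gaussKernel 0 w (t - s)) (F' := fun t s => 4 * w * gaussKernel 2 w (t - s))
    (C' := 4 * w * (2 ! / w ^ 2)) hm univ_mem
    (fun _ => by fun_prop) (by fun_prop) (fun s => abs_gaussKernel_le 0 hw (t - s))
    (fun t _ s => ?_)
    fun t _ s => (hasDerivAt_gaussKernel_zero_right hw.ne' (t - s)).comp_sub_const t s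
  · simpa only [gaussConv, mul_left_comm (m _), intervalIntegral.integral_const_mul] using h
  · rw [abs_mul, abs_of_pos (by positivity)]
    gcongr
    exact abs_gaussKernel_le 2 hw (t - s)

end GaussConv

section RadialProfile

/-- The function `w ↦ w u₁(x, t)` of `w = ‖x - ξ‖²`, for a density `m` on `[a, b]`. -/
def radialProfile (m : ℝ → ℝ) (a b w t : ℝ) : ℝ :=
  -2 * ((∫ s in a..t, m s) - gaussConv m a b 0 w t)

variable {m : ℝ → ℝ} {a b w t : ℝ}

lemma hasDerivAt_radialProfile_left (hm : IntervalIntegrable m volume a b) (hw : 0 < w)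
    (t : ℝ) : HasDerivAt (fun w => radialProfile m a b w t) (2 * gaussConv m a b 1 w t) w := by
  have h := (hasDerivAt_gaussConv_left hm 0 hw t).const_sub (∫ s in a..t, m s)
  simpa [radialProfile] using h.const_mul (-2)

lemma contDiffOn_radialProfile_left (hm : IntervalIntegrable m volume a b) (t : ℝ) :
    ContDiffOn ℝ ∞ (fun w => radialProfile m a b w t) (Ioi 0) :=
  contDiffOn_const.mul (contDiffOn_const.sub (contDiffOn_gaussConv_left hm 0 t))

lemma hasDerivAt_radialProfile_right (hm : IntervalIntegrable m volume a b) (hw : 0 < w)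
    (ht : t ∈ Ioo a b) (hmt : ContinuousAt m t) :
    HasDerivAt (fun t => radialProfile m a b w t) (-2 * (m t - 4 * w * gaussConv m a b 2 w t)) t :=
  ((hasDerivAt_integral_right_of_mem_Ioo hm ht hmt).sub
    (hasDerivAt_gaussConv_zero_right hm hw t)).const_mul (-2)

variable {T : ℝ} {ξ x : E4}

lemma u₁_eq_radialProfile_div (hm : IntervalIntegrable m volume (-T) b)
    (hx : x ≠ ξ) (ht : t ∈ Icc (-T) b) :
    u₁ T m ξ x t = radialProfile m (-T) b (‖x - ξ‖ ^ 2) t / ‖x - ξ‖ ^ 2 := by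
  have hζ : 0 < ‖x - ξ‖ := norm_sub_pos_iff.2 hx
  have hw : 0 < ‖x - ξ‖ ^ 2 := by positivity
  have hsub : uIcc (-T) t ⊆ uIcc (-T) b := uIcc_subset_uIcc left_mem_uIcc (Icc_subset_uIcc ht)
  have hkernel : ∫ s in (-T)..t, m s * kk ‖x - ξ‖ (t - s) =
      ∫ s in (-T)..t, (m s - m s * gaussKernel 0 (‖x - ξ‖ ^ 2) (t - s)) / ‖x - ξ‖ ^ 2 := by
    refine intervalIntegral.integral_congr_Ioo_of_le ht.1 fun s hs => ?_
    simp only [kk_eq_gaussKernel hζ.ne' (sub_pos.2 hs.2)]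
    ring
  rw [u₁, hkernel, intervalIntegral.integral_div, intervalIntegral.integral_sub
    (hm.mono_set hsub) ((intervalIntegrable_mul_gaussKernel hm 0 hw t).mono_set hsub),
    radialProfile, gaussConv_eq_integral_past hm 0 hw ht, mul_div_assoc]

lemma u₁_eventuallyEq_radialProfile_div (hm : IntervalIntegrable m volume (-T) b) (hx : x ≠ ξ)
    (ht : t ∈ Icc (-T) b) :
    (fun x' => u₁ T m ξ x' t) =ᶠ[𝓝 x]
      fun x' => radialProfile m (-T) b (‖x' - ξ‖ ^ 2) t / ‖x' - ξ‖ ^ 2 := by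
  filter_upwards [isOpen_ne.mem_nhds hx] with x' hx' using u₁_eq_radialProfile_div hm hx' ht

lemma hasDerivAt_u₁ (hm : IntervalIntegrable m volume (-T) b) (hx : x ≠ ξ) (ht : t ∈ Ioo (-T) b)
    (hmt : ContinuousAt m t) :
    HasDerivAt (fun s => u₁ T m ξ x s)
      (-2 * m t / ‖x - ξ‖ ^ 2 + 8 * gaussConv m (-T) b 2 (‖x - ξ‖ ^ 2) t) t := by
  have hw : 0 < ‖x - ξ‖ ^ 2 := pow_pos (norm_sub_pos_iff.2 hx) 2
  have hprofile := (hasDerivAt_radialProfile_right hm hw ht hmt).div_const (‖x - ξ‖ ^ 2)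
  have hne : ‖x - ξ‖ ≠ 0 := norm_sub_eq_zero_iff.not.2 hx
  refine (hprofile.congr_of_eventuallyEq ?_).congr_deriv (by field_simp; ring)
  filter_upwards [Icc_mem_nhds ht.1 ht.2] with s hs using u₁_eq_radialProfile_div hm hx hs

lemma contDiffAt_u₁ (hm : IntervalIntegrable m volume (-T) b) (hx : x ≠ ξ)
    (ht : t ∈ Icc (-T) b) : ContDiffAt ℝ ∞ (fun x' => u₁ T m ξ x' t) x := by
  have hw : 0 < ‖x - ξ‖ ^ 2 := pow_pos (norm_sub_pos_iff.2 hx) 2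
  have hsq : ContDiffAt ℝ ∞ (fun x' : E4 => ‖x' - ξ‖ ^ 2) x :=
    ((contDiff_id.sub contDiff_const).norm_sq ℝ).contDiffAt
  have hprofile : ContDiffAt ℝ ∞ (fun w => radialProfile m (-T) b w t) (‖x - ξ‖ ^ 2) :=
    (contDiffOn_radialProfile_left hm t).contDiffAt (Ioi_mem_nhds hw)
  have hcomp : ContDiffAt ℝ ∞ (fun x' => radialProfile m (-T) b (‖x' - ξ‖ ^ 2) t) x :=
    ContDiffAt.comp (g := fun w => radialProfile m (-T) b w t) x hprofile hsq
  exact (hcomp.fun_div hsq hw.ne').congr_of_eventuallyEq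
    (u₁_eventuallyEq_radialProfile_div hm hx ht)

lemma lap_u₁ (hm : IntervalIntegrable m volume (-T) b) (hx : x ≠ ξ) (ht : t ∈ Icc (-T) b) :
    lap (fun x' => u₁ T m ξ x' t) x = 8 * gaussConv m (-T) b 2 (‖x - ξ‖ ^ 2) t := by
  have hw : 0 < ‖x - ξ‖ ^ 2 := pow_pos (norm_sub_pos_iff.2 hx) 2
  have hfirst : ∀ᶠ w in 𝓝 (‖x - ξ‖ ^ 2), HasDerivAt (fun w => radialProfile m (-T) b w t)
      (2 * gaussConv m (-T) b 1 w t) w := by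
    filter_upwards [Ioi_mem_nhds hw] with w hw using hasDerivAt_radialProfile_left hm hw t
  have hsecond := (hasDerivAt_gaussConv_left hm 1 hw t).const_mul 2
  rw [lap_congr_of_eventuallyEq (u₁_eventuallyEq_radialProfile_div hm hx ht),
    lap_comp_norm_sub_sq_div hx hfirst hsecond]
  ring

end RadialProfile

theorem u₁_solves_heat_with_source_general {T b : ℝ} {m : ℝ → ℝ}
    (hm : IntervalIntegrable m volume (-T) b) {ξ x : E4} (hx : x ≠ ξ) {t : ℝ}
    (ht : t ∈ Ioo (-T) b) (hmt : ContinuousAt m t) :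
    DifferentiableAt ℝ (fun s => u₁ T m ξ x s) t ∧
      ContDiffAt ℝ ∞ (fun x' => u₁ T m ξ x' t) x ∧
      deriv (fun s => u₁ T m ξ x s) t - lap (fun x' => u₁ T m ξ x' t) x
        = -2 * m t / ‖x - ξ‖ ^ 2 := by
  have ht' := Ioo_subset_Icc_self ht
  have htime := hasDerivAt_u₁ hm hx ht hmt
  refine ⟨htime.differentiableAt, contDiffAt_u₁ hm hx ht', ?_⟩
  rw [htime.deriv, lap_u₁ hm hx ht', add_sub_cancel_right]

/-- Let `T > 0`, let `μ : [-T, T] → ℝ` be continuously differentiable (with derivative `μ'`)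
and fix `ξ ∈ ℝ⁴`.  Then `u₁(x, t) = -2 ∫_{-T}^{t} μ'(s) k(|x - ξ|, t - s) ds` is
differentiable in `t` and twice differentiable in `x` on `(ℝ⁴ ∖ {ξ}) × (-T, T)`, and
satisfies `∂_t u₁ - Δ_x u₁ = -2 μ'(t)/|x - ξ|²` there. -/
theorem u₁_solves_heat_with_source (T : ℝ) (hT : 0 < T) (μ μ' : ℝ → ℝ)
    (hμ : ∀ t ∈ Icc (-T) T, HasDerivAt μ (μ' t) t)
    (hμ'cont : ContinuousOn μ' (Icc (-T) T)) (ξ : E4) :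
    ∀ x : E4, x ≠ ξ → ∀ t ∈ Ioo (-T) T,
      DifferentiableAt ℝ (fun s => u₁ T μ' ξ x s) t ∧
      ContDiffAt ℝ 2 (fun x' => u₁ T μ' ξ x' t) x ∧
      deriv (fun s => u₁ T μ' ξ x s) t - lap (fun x' => u₁ T μ' ξ x' t) x
        = -2 * μ' t / ‖x - ξ‖ ^ 2 := by
  intro x hx t ht
  have hm : IntervalIntegrable μ' volume (-T) T :=
    hμ'cont.intervalIntegrable_of_Icc (by linarith)
  obtain ⟨htime, hspace, heq⟩ := u₁_solves_heat_with_source_general hm hx ht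
    (hμ'cont.continuousAt (Icc_mem_nhds ht.1 ht.2))
  exact ⟨htime, mod_cast contDiffAt_infty.1 hspace 2, heq⟩
end
end
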